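/- arXiv:2111.14026 — 10 statements merged into one kernel-verified Lean document; each statement's English description precedes it below -/
import Mathlib

section
/- (Insdel-metric Singleton bound) Every code C ⊆ [q]^n with at least two codewords satisfies |C| ≤ q^{n − d_I(C)/2 + 1}. -/
/-!
If any two distinct codewords have longest common subsequence shorter than `k`, then no two of them
share their first `k` letters, since a common prefix is a common subsequence. Hence truncation to
`k` letters is injective on the code, which has at most `q ^ k` elements (trivially so if `k`
exceeds `n`). In a code of minimum insdel distance `d`, common subsequences of distinct codewords
have length at most `n - d / 2`, so one may take `k = n - d / 2 + 1`.
-/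

open scoped BigOperators

/-- Length of a longest common subsequence of two words of length `n`. -/
noncomputable def lcsLen {α : Type*} {n : ℕ} (u v : Fin n → α) : ℕ :=
  sSup {ℓ : ℕ | ∃ w : List α, w.length = ℓ ∧ w.Sublist (List.ofFn u) ∧ w.Sublist (List.ofFn v)}

/-- Insdel distance between two words of length `n`: `d_I(u,v) = 2n - 2·ℓ_LCS(u,v)`. -/
noncomputable def insdelDist {α : Type*} {n : ℕ} (u v : Fin n → α) : ℕ :=
  2 * n - 2 * lcsLen u v

/-- Minimum insdel distance of a code. -/
noncomputable def insdelDistSet {α : Type*} {n : ℕ} (C : Set (Fin n → α)) : ℕ :=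
  sInf {d : ℕ | ∃ u ∈ C, ∃ v ∈ C, u ≠ v ∧ insdelDist u v = d}

/-- Minimum Hamming distance of a code. -/
noncomputable def hammingDistSet {α : Type*} {n : ℕ} [DecidableEq α] (C : Set (Fin n → α)) : ℕ :=
  sInf {d : ℕ | ∃ u ∈ C, ∃ v ∈ C, u ≠ v ∧ hammingDist u v = d}

section

variable {α : Type*} {k n : ℕ}

lemma ofFn_comp_sublist (u : Fin n → α) (e : Fin k ↪o Fin n) :
    (List.ofFn (u ∘ e)).Sublist (List.ofFn u) :=
  List.sublist_iff_exists_fin_orderEmbedding_get_eq.mpr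
    ⟨(Fin.castOrderIso List.length_ofFn).toOrderEmbedding.trans <|
      e.trans (Fin.castOrderIso List.length_ofFn.symm).toOrderEmbedding,
      fun i => by simp [Fin.cast]⟩

lemma mem_upperBounds_length_common_sublist (u v : Fin n → α) :
    n ∈ upperBounds {ℓ : ℕ | ∃ w : List α,
      w.length = ℓ ∧ w.Sublist (List.ofFn u) ∧ w.Sublist (List.ofFn v)} := by
  rintro _ ⟨w, rfl, hw, -⟩
  exact hw.length_le.trans_eq List.length_ofFn

lemma lcsLen_le (u v : Fin n → α) : lcsLen u v ≤ n :=
  csSup_le' (mem_upperBounds_length_common_sublist u v)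

lemma le_lcsLen_of_comp_eq {u v : Fin n → α} {e f : Fin k ↪o Fin n} (h : u ∘ e = v ∘ f) :
    k ≤ lcsLen u v :=
  le_csSup ⟨n, mem_upperBounds_length_common_sublist u v⟩
    ⟨List.ofFn (u ∘ e), List.length_ofFn, ofFn_comp_sublist u e, h ▸ ofFn_comp_sublist v f⟩

lemma insdelDistSet_le_insdelDist {C : Set (Fin n → α)} {u v : Fin n → α} (hu : u ∈ C)
    (hv : v ∈ C) (huv : u ≠ v) : insdelDistSet C ≤ insdelDist u v :=
  Nat.sInf_le ⟨u, hu, v, hv, huv, rfl⟩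

lemma lcsLen_le_sub_insdelDistSet {C : Set (Fin n → α)} {u v : Fin n → α} (hu : u ∈ C)
    (hv : v ∈ C) (huv : u ≠ v) : lcsLen u v ≤ n - insdelDistSet C / 2 := by
  have hdist : insdelDistSet C ≤ 2 * n - 2 * lcsLen u v := insdelDistSet_le_insdelDist hu hv huv
  have hlcs : lcsLen u v ≤ n := lcsLen_le u v
  omega

lemma injOn_comp_of_pairwise_lcsLen_lt {C : Set (Fin n → α)}
    (hC : C.Pairwise fun u v => lcsLen u v < k) (e : Fin k ↪o Fin n) :
    Set.InjOn (fun w => w ∘ e) C := by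
  intro u hu v hv h
  by_contra huv
  exact (hC hu hv huv).not_ge (le_lcsLen_of_comp_eq h)

lemma card_le_pow_of_pairwise_lcsLen_lt [Fintype α] [Nonempty α] {C : Finset (Fin n → α)}
    (hC : (C : Set (Fin n → α)).Pairwise fun u v => lcsLen u v < k) :
    C.card ≤ Fintype.card α ^ k := by
  obtain hkn | hnk := le_total k n
  · calc
      C.card ≤ Fintype.card (Fin k → α) :=
        Finset.card_le_card_of_injOn _ (fun _ _ => Finset.mem_univ _)
          (injOn_comp_of_pairwise_lcsLen_lt hC (Fin.castLEOrderEmb hkn))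
      _ = Fintype.card α ^ k := by rw [Fintype.card_fun, Fintype.card_fin]
  · calc
      C.card ≤ Fintype.card (Fin n → α) := C.card_le_univ
      _ = Fintype.card α ^ n := by rw [Fintype.card_fun, Fintype.card_fin]
      _ ≤ Fintype.card α ^ k := Nat.pow_le_pow_right Fintype.card_pos hnk

theorem insdel_singleton_bound_general [Fintype α] (C : Finset (Fin n → α)) (hC : 2 ≤ C.card) :
    C.card ≤ Fintype.card α ^ (n - insdelDistSet (C : Set (Fin n → α)) / 2 + 1) := by
  obtain ⟨u, -, v, -, huv⟩ := Finset.one_lt_card.mp hC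
  obtain ⟨i, -⟩ := Function.ne_iff.mp huv
  have : Nonempty α := ⟨u i⟩
  exact card_le_pow_of_pairwise_lcsLen_lt fun u hu v hv huv =>
    Nat.lt_succ_of_le (lcsLen_le_sub_insdelDistSet hu hv huv)

end

/-- Insdel-metric Singleton bound: every code `C ⊆ [q]^n` with at least two codewords
satisfies `|C| ≤ q^(n - d_I(C)/2 + 1)`. -/
theorem insdel_singleton_bound (q n : ℕ) (hq : 2 ≤ q) (hn : 1 ≤ n)
    (C : Finset (Fin n → Fin q)) (hC : 2 ≤ C.card) :
    C.card ≤ q ^ (n - insdelDistSet (C : Set (Fin n → Fin q)) / 2 + 1) := by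
  simpa only [Fintype.card_fin] using insdel_singleton_bound_general C hC
end

section
/- For all integers q ≥ 2, n ≥ 3 and every even integer d with 4 ≤ d ≤ 2n − 2, one has I_q(n, d) ≤ (q^{n − d/2 + 1} + q^{n − d/2})/2. -/
/-!
If two distinct codewords shared a subsequence of length `k = n - d/2 + 1`, their insdel distance
would be at most `2n - 2k < d`; hence the sets of length-`k` subsequences of the codewords are
pairwise disjoint subsets of `[q]^k`. A non-constant word has at least two such subsequences, and
each of the at most `q` constant words has one, so `2|C| ≤ q^k + q ≤ q^k + q^(k-1)`.
-/

open scoped BigOperators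

/-- `I_q(n,d)`: the largest size of a code in `[q]^n` with insdel distance at least `d`. -/
noncomputable def maxInsdelSize (q n d : ℕ) : ℕ :=
  sSup {M : ℕ | ∃ C : Finset (Fin n → Fin q), C.card = M ∧
    ∀ u ∈ C, ∀ v ∈ C, u ≠ v → d ≤ insdelDist u v}

/-- The set of length-`k` subsequences of a word `u`. They are encoded as vectors, so that the
ambient type has `|α| ^ k` elements. -/
def subseqFinset {α : Type*} [Fintype α] [DecidableEq α] {n : ℕ} (k : ℕ) (u : Fin n → α) :
    Finset (List.Vector α k) :=
  {w | w.toList.Sublist (List.ofFn u)}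

lemma length_le_lcsLen {α : Type*} {n : ℕ} {u v : Fin n → α} {w : List α}
    (hu : w.Sublist (List.ofFn u)) (hv : w.Sublist (List.ofFn v)) : w.length ≤ lcsLen u v := by
  refine le_csSup ⟨n, ?_⟩ ⟨w, rfl, hu, hv⟩
  rintro _ ⟨w', rfl, hw', -⟩
  simpa using hw'.length_le

lemma pairwise_eq_of_sublists_eq {α : Type*} {l : List α} {k : ℕ} (hk : 1 ≤ k)
    (hkl : k < l.length)
    (h : ∀ v w : List α, v.Sublist l → w.Sublist l → v.length = k → w.length = k → v = w) :
    l.Pairwise (· = ·) := by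
  rw [← List.isChain_iff_pairwise, List.isChain_iff_forall_rel_of_append_cons_cons]
  rintro a b A B rfl
  -- Complete each of the adjacent letters `a`, `b` by the same `k - 1` letters of `A` and `B`.
  let A' := A.take (k - 1)
  let B' := B.take (k - 1 - A.length)
  have hA : A'.Sublist A := List.take_sublist _ _
  have hB : B'.Sublist B := List.take_sublist _ _
  have hlen (c : α) : (A' ++ c :: B').length = k := by
    simp only [List.length_append, List.length_cons, A', B', List.length_take] at hkl ⊢
    omega
  have heq : A' ++ a :: B' = A' ++ b :: B' :=
    h _ _ (hA.append ((hB.cons b).cons_cons a)) (hA.append ((hB.cons_cons b).cons a))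
      (hlen a) (hlen b)
  simpa using heq

section Fintype

variable {α : Type*} [Fintype α] [DecidableEq α] {n k : ℕ}

lemma mem_subseqFinset {u : Fin n → α} {w : List.Vector α k} :
    w ∈ subseqFinset k u ↔ w.toList.Sublist (List.ofFn u) := by
  simp [subseqFinset]

lemma subseqFinset_nonempty (hkn : k ≤ n) (u : Fin n → α) : (subseqFinset k u).Nonempty :=
  ⟨⟨(List.ofFn u).take k, by simpa using hkn⟩, mem_subseqFinset.2 (List.take_sublist _ _)⟩

lemma disjoint_subseqFinset_of_lcsLen_lt {u v : Fin n → α} (h : lcsLen u v < k) :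
    Disjoint (subseqFinset k u) (subseqFinset k v) := by
  refine Finset.disjoint_left.2 fun w hu hv => h.not_ge ?_
  simpa using length_le_lcsLen (mem_subseqFinset.1 hu) (mem_subseqFinset.1 hv)

lemma eq_const_of_card_subseqFinset_le_one (hk : 1 ≤ k) (hkn : k < n) {u : Fin n → α}
    (hu : (subseqFinset k u).card ≤ 1) : ∃ a, Function.const (Fin n) a = u := by
  have hpair : (List.ofFn u).Pairwise (· = ·) := by
    refine pairwise_eq_of_sublists_eq hk (by simpa using hkn) fun v w hvu hwu hv hw => ?_
    exact congrArg List.Vector.toList <| Finset.card_le_one.1 hu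
      ⟨v, hv⟩ (mem_subseqFinset.2 hvu) ⟨w, hw⟩ (mem_subseqFinset.2 hwu)
  have : NeZero n := ⟨by omega⟩
  refine ⟨u 0, funext fun i => ?_⟩
  rcases (Fin.zero_le i).eq_or_lt with rfl | hi
  · rfl
  · exact List.pairwise_ofFn.1 hpair hi

lemma two_le_card_subseqFinset_add (hk : 1 ≤ k) (hkn : k < n) (u : Fin n → α) :
    2 ≤ (subseqFinset k u).card + if ∃ a, Function.const (Fin n) a = u then 1 else 0 := by
  have hpos := (subseqFinset_nonempty hkn.le u).card_pos
  split_ifs with hu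
  · omega
  · have := mt (eq_const_of_card_subseqFinset_le_one hk hkn) hu
    omega

lemma card_filter_const_le (C : Finset (Fin n → α)) :
    (C.filter fun u => ∃ a, Function.const (Fin n) a = u).card ≤ Fintype.card α := by
  calc _ ≤ (Finset.univ.image (Function.const (Fin n) : α → Fin n → α)).card :=
        Finset.card_le_card fun u hu => by simpa using (Finset.mem_filter.1 hu).2
    _ ≤ Fintype.card α := Finset.card_image_le

lemma two_mul_card_le_of_pairwiseDisjoint (hk : 1 ≤ k) (hkn : k < n) {C : Finset (Fin n → α)}
    (hC : (C : Set (Fin n → α)).PairwiseDisjoint (subseqFinset k)) :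
    2 * C.card ≤ Fintype.card α ^ k + Fintype.card α := by
  have hsubseq : ∑ u ∈ C, (subseqFinset k u).card ≤ Fintype.card α ^ k := by
    rw [← Finset.card_biUnion hC, ← card_vector]
    exact Finset.card_le_univ _
  calc 2 * C.card = ∑ _u ∈ C, 2 := by simp [mul_comm]
    _ ≤ ∑ u ∈ C, ((subseqFinset k u).card +
          if ∃ a, Function.const (Fin n) a = u then 1 else 0) :=
        Finset.sum_le_sum fun u _ => two_le_card_subseqFinset_add hk hkn u
    _ = ∑ u ∈ C, (subseqFinset k u).card +
          (C.filter fun u => ∃ a, Function.const (Fin n) a = u).card := by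
        rw [Finset.sum_add_distrib, Finset.card_filter]
    _ ≤ Fintype.card α ^ k + Fintype.card α :=
        add_le_add hsubseq (card_filter_const_le C)

end Fintype

theorem maxInsdelSize_upper_bound_general {q n d k : ℕ} (hk : 1 ≤ k) (hkn : k < n)
    (hd : 2 * n < d + 2 * k) : maxInsdelSize q n d ≤ (q ^ k + q) / 2 := by
  refine csSup_le ⟨0, ∅, by simp⟩ ?_
  rintro _ ⟨C, rfl, hC⟩
  have hdisj : (C : Set (Fin n → Fin q)).PairwiseDisjoint (subseqFinset k) := by
    intro u hu v hv huv
    have hdist : d ≤ 2 * n - 2 * lcsLen u v := hC u hu v hv huv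
    exact disjoint_subseqFinset_of_lcsLen_lt (by omega)
  have hcard := two_mul_card_le_of_pairwiseDisjoint hk hkn hdisj
  rw [Fintype.card_fin] at hcard
  omega

/-- For `q ≥ 2`, `n ≥ 3` and even `d` with `4 ≤ d ≤ 2n - 2`, one has
`I_q(n,d) ≤ (q^(n - d/2 + 1) + q^(n - d/2))/2`. -/
theorem maxInsdelSize_upper_bound (q n d : ℕ) (hq : 2 ≤ q) (hn : 3 ≤ n)
    (hdev : 2 ∣ d) (hd4 : 4 ≤ d) (hdn : d ≤ 2 * n - 2) :
    maxInsdelSize q n d ≤ (q ^ (n - d / 2 + 1) + q ^ (n - d / 2)) / 2 := by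
  refine (maxInsdelSize_upper_bound_general (k := n - d / 2 + 1)
    (by omega) (by omega) (by omega)).trans ?_
  gcongr
  exact Nat.le_self_pow (by omega) q
end

section
/- Let q be a prime power and let C ⊆ F_q^n be an F_q-linear code of dimension k whose insdel distance satisfies 4 ≤ d_I(C) ≤ 2n − 2. Then d_I(C) ≤ 2n − 2k. -/
/-!
For `k ≤ 1` the bound is contained in `d_I(C) ≤ 2n - 2`. For `k ≥ 2`, put `m = min k (n - 1)` and
consider the pairs `(x, y)` of codewords such that `x` begins with `0` and its first `m` letters
are the letters `2, …, m + 1` of `y`. They are cut out of the `2k`-dimensional space `C × C` by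
`m + 1 < 2k` linear conditions, so there is such a pair other than `(0, 0)`. If `x ≠ y`, these are
distinct codewords with a common subsequence of length `m`. If `x = y`, the shift relation spreads
the initial zero over the first `m + 1` letters of `x`, and `x` is compared with the zero codeword
instead. Either way `d_I(C) ≤ 2n - 2m`. Since `d_I(C) > 2` rules out `m = n - 1`, we get `m = k`
and the bound follows.
-/

open scoped BigOperators

section CommonSubsequence

variable {α : Type*} {m n : ℕ}

lemma ofFn_comp_sublist_ofFn (u : Fin n → α) (f : Fin m ↪o Fin n) :
    (List.ofFn (u ∘ f)).Sublist (List.ofFn u) :=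
  List.sublist_iff_exists_fin_orderEmbedding_get_eq.2
    ⟨(Fin.castOrderIso List.length_ofFn).toOrderEmbedding.trans
      (f.trans (Fin.castOrderIso List.length_ofFn.symm).toOrderEmbedding),
      fun i => by simp only [List.get_ofFn]; rfl⟩

lemma le_lcsLen_of_comp_eq_comp {u v : Fin n → α} (f g : Fin m ↪o Fin n)
    (h : u ∘ f = v ∘ g) : m ≤ lcsLen u v := by
  refine le_csSup ⟨n, ?_⟩ ⟨List.ofFn (u ∘ f), List.length_ofFn, ofFn_comp_sublist_ofFn u f,
    h ▸ ofFn_comp_sublist_ofFn v g⟩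
  rintro _ ⟨w, rfl, hw, -⟩
  simpa using hw.length_le

lemma insdelDistSet_le_of_comp_eq_comp {C : Set (Fin n → α)} {u v : Fin n → α} (hu : u ∈ C)
    (hv : v ∈ C) (huv : u ≠ v) (f g : Fin m ↪o Fin n) (h : u ∘ f = v ∘ g) :
    insdelDistSet C ≤ 2 * n - 2 * m :=
  calc
    insdelDistSet C ≤ insdelDist u v := Nat.sInf_le ⟨u, hu, v, hv, huv, rfl⟩
    _ ≤ 2 * n - 2 * m := by
      have := le_lcsLen_of_comp_eq_comp f g h
      unfold insdelDist
      gcongr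

end CommonSubsequence

section Linear

variable {R : Type*} [Ring R] [StrongRankCondition R]

lemma exists_ne_zero_map_eq_map_of_finrank_lt {M₁ M₂ N : Type*} [AddCommGroup M₁] [Module R M₁]
    [AddCommGroup M₂] [Module R M₂] [AddCommGroup N] [Module R N] [Module.Finite R N]
    (φ : M₁ →ₗ[R] N) (ψ : M₂ →ₗ[R] N)
    (h : Module.finrank R N < Module.finrank R M₁ + Module.finrank R M₂) :
    ∃ p : M₁ × M₂, p ≠ 0 ∧ φ p.1 = ψ p.2 := by
  by_contra! hφψ
  have hker : LinearMap.ker (φ.coprod (-ψ)) = ⊥ := by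
    refine LinearMap.ker_eq_bot'.2 fun p hp => by_contra fun hne => hφψ p hne ?_
    simpa [← sub_eq_add_neg, sub_eq_zero] using hp
  obtain ⟨b₁, hb₁⟩ := exists_linearIndependent_of_le_finrank (le_refl (Module.finrank R M₁))
  obtain ⟨b₂, hb₂⟩ := exists_linearIndependent_of_le_finrank (le_refl (Module.finrank R M₂))
  have hcard := ((linearIndependent_inl_union_inr' hb₁ hb₂).map' _ hker).fintype_card_le_finrank
  rw [Fintype.card_sum, Fintype.card_fin, Fintype.card_fin] at hcard
  exact hcard.not_gt h

lemma exists_apply_eq_zero_comp_eq_comp_of_lt_two_mul_finrank {ι κ : Type*} [Fintype κ]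
    (C : Submodule R (ι → R)) (hC : Fintype.card κ + 1 < 2 * Module.finrank R C) (a : ι)
    (f g : κ → ι) :
    ∃ x ∈ C, ∃ y ∈ C, (x ≠ 0 ∨ y ≠ 0) ∧ x a = 0 ∧ x ∘ f = y ∘ g := by
  obtain ⟨⟨x, y⟩, hne, hxy⟩ := exists_ne_zero_map_eq_map_of_finrank_lt
    (((LinearMap.proj a).prod (LinearMap.funLeft R R f)).domRestrict C)
    ((LinearMap.inr R R (κ → R) ∘ₗ LinearMap.funLeft R R g).domRestrict C)
    (by rw [Module.finrank_prod, Module.finrank_self, Module.finrank_fintype_fun_eq_card]; omega)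
  obtain ⟨ha, hfg⟩ := Prod.ext_iff.1 hxy
  refine ⟨x, x.2, y, y.2, ?_, ha, hfg⟩
  contrapose! hne
  ext1 <;> ext1
  exacts [hne.1, hne.2]

lemma insdelDistSet_le_of_lt_two_mul_finrank {m n : ℕ} (hmn : m < n)
    (C : Submodule R (Fin n → R)) (hC : m + 1 < 2 * Module.finrank R C) :
    insdelDistSet (C : Set (Fin n → R)) ≤ 2 * n - 2 * m := by
  let e := Fin.castLEOrderEmb hmn
  let f := Fin.castSuccOrderEmb.trans e
  let g := (Fin.succOrderEmb m).trans e
  obtain ⟨x, hx, y, hy, hne, hx0, hfg⟩ :=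
    exists_apply_eq_zero_comp_eq_comp_of_lt_two_mul_finrank C (by simpa using hC) (e 0) f g
  obtain rfl | hxy := eq_or_ne x y
  · have hzero : ∀ i, x (e i) = 0 :=
      Fin.induction hx0 fun i hi => (congrFun hfg i).symm.trans hi
    exact insdelDistSet_le_of_comp_eq_comp hx C.zero_mem (or_self_iff.1 hne) f f
      (funext fun i => hzero i.castSucc)
  · exact insdelDistSet_le_of_comp_eq_comp hx hy hxy f g hfg

theorem linear_insdel_bound_general {n : ℕ} (C : Submodule R (Fin n → R))
    (h4 : 4 ≤ insdelDistSet (C : Set (Fin n → R)))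
    (h2n : insdelDistSet (C : Set (Fin n → R)) ≤ 2 * n - 2) :
    insdelDistSet (C : Set (Fin n → R)) ≤ 2 * n - 2 * Module.finrank R C := by
  obtain hk | hk := Nat.lt_or_ge (Module.finrank R C) 2
  · omega
  · let m := min (Module.finrank R C) (n - 1)
    have hle : insdelDistSet (C : Set (Fin n → R)) ≤ 2 * n - 2 * m :=
      insdelDistSet_le_of_lt_two_mul_finrank (by omega) C (by omega)
    have hm : m = Module.finrank R C := by omega
    rwa [hm] at hle

end Linear

/-- Every `F_q`-linear `[n,k]` code `C` with `4 ≤ d_I(C) ≤ 2n - 2` satisfies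
`d_I(C) ≤ 2n - 2k`. -/
theorem linear_insdel_bound (q n k : ℕ) (F : Type*) [Field F] [Fintype F]
    (hF : Fintype.card F = q)
    (C : Submodule F (Fin n → F)) (hk : Module.finrank F C = k)
    (h4 : 4 ≤ insdelDistSet (C : Set (Fin n → F)))
    (h2n : insdelDistSet (C : Set (Fin n → F)) ≤ 2 * n - 2) :
    insdelDistSet (C : Set (Fin n → F)) ≤ 2 * n - 2 * k :=
  hk ▸ linear_insdel_bound_general C h4 h2n
end

section
/- Let q be a prime power, k ≥ 3 an integer, and α_1, α_2, ..., α_n pairwise distinct elements of F_q with n ≥ k(k+1)/2 − 2. Then there exist two distinct tuples i = (i_1,...,i_{k−1}) and j = (j_1,...,j_{k−1}) of indices with 1 ≤ i_1 < i_2 < ... < i_{k−1} ≤ n and 1 ≤ j_1 < j_2 < ... < j_{k−1} ≤ n, such that j_ℓ < i_ℓ ≤ k(k+1)/2 − 2 for every ℓ = 1,...,k−1, and the (k−1)×(k−1) matrix over F_q whose (r,ℓ)-entry is α_{i_ℓ}^r − α_{j_ℓ}^r (for 1 ≤ r ≤ k−1, 1 ≤ ℓ ≤ k−1) is invertible. 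-/
open scoped BigOperators

/-!
For distinct points the consecutive indices `j = (1, …, k - 1)` and `i = (2, …, k)` always work.
Subtracting from each column of the transposed Vandermonde matrix of `α₁, …, α_k` the one before it
turns the row of ones into `(1, 0, …, 0)`; expanding along that row leaves exactly the matrix of
differences, whose determinant is therefore the Vandermonde determinant.
-/

lemma det_eq_mul_det_sub_consecutive_cols {R : Type*} [CommRing R] {m : ℕ}
    (A : Matrix (Fin (m + 1)) (Fin (m + 1)) R) {c : R} (hc : ∀ l, A 0 l = c) :
    A.det = c * (Matrix.of fun r l : Fin m => A r.succ l.succ - A r.succ l.castSucc).det := by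
  let B : Matrix (Fin (m + 1)) (Fin (m + 1)) R :=
    Matrix.of fun r => Fin.cons (A r 0) fun l => A r l.succ - A r l.castSucc
  have hAB : A.det = B.det :=
    Matrix.det_eq_of_forall_col_eq_smul_add_pred (fun _ => 1) (fun _ => rfl)
      fun r l => by simp [B]
  have hB : B 0 = Pi.single 0 c := by
    ext l
    cases l using Fin.cases <;> simp [B, hc]
  rw [hAB, Matrix.det_succ_row_zero, Fintype.sum_eq_single 0 fun l hl => by simp [hB, hl], hB]
  simp [B, Matrix.submatrix]

lemma det_pow_sub_pow_consecutive {R : Type*} [CommRing R] {m : ℕ} (x : Fin (m + 1) → R) :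
    (Matrix.of fun r l : Fin m =>
      x l.succ ^ ((r : ℕ) + 1) - x l.castSucc ^ ((r : ℕ) + 1)).det =
      (Matrix.vandermonde x).det := by
  rw [← Matrix.det_transpose (Matrix.vandermonde x),
    det_eq_mul_det_sub_consecutive_cols (c := 1) _ (by simp [Matrix.vandermonde_apply]), one_mul]
  simp [Matrix.vandermonde_apply]

lemma le_mul_succ_div_two_sub_two {k : ℕ} (hk : 3 ≤ k) : k ≤ k * (k + 1) / 2 - 2 := by
  have h : k + 2 ≤ k * (k + 1) / 2 := by
    rw [Nat.le_div_iff_mul_le two_pos]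
    nlinarith
  exact Nat.le_sub_of_add_le h

theorem exists_invertible_difference_matrix_general {R : Type*} [CommRing R] [IsDomain R]
    {n k : ℕ} (hk : 2 ≤ k) (hkn : k ≤ n) (α : Fin n → R) (hα : Function.Injective α) :
    ∃ i j : Fin (k - 1) → Fin n, StrictMono i ∧ StrictMono j ∧ i ≠ j ∧
      (∀ ℓ : Fin (k - 1), j ℓ < i ℓ ∧ (i ℓ : ℕ) + 1 ≤ k) ∧
      (Matrix.of fun r ℓ : Fin (k - 1) =>
        α (i ℓ) ^ ((r : ℕ) + 1) - α (j ℓ) ^ ((r : ℕ) + 1)).det ≠ 0 := by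
  obtain ⟨m, rfl⟩ := Nat.exists_eq_add_of_le' hk
  let e : Fin (m + 2) → Fin n := Fin.castLE hkn
  have he : StrictMono e := Fin.strictMono_castLE hkn
  have hlt (ℓ : Fin (m + 1)) : e ℓ.castSucc < e ℓ.succ := he ℓ.castSucc_lt_succ
  refine ⟨fun ℓ => e ℓ.succ, fun ℓ => e ℓ.castSucc, he.comp Fin.strictMono_succ,
    he.comp Fin.strictMono_castSucc, Function.ne_iff.mpr ⟨(0 : Fin (m + 1)), (hlt 0).ne'⟩,
    fun ℓ => ⟨hlt ℓ, ℓ.succ.isLt⟩, ?_⟩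
  exact (det_pow_sub_pow_consecutive (α ∘ e)).trans_ne
    (Matrix.det_vandermonde_ne_zero_iff.mpr (hα.comp he.injective))

/-- Lemma 3.8: existence of increasing index tuples `i, j` with `j_ℓ < i_ℓ ≤ k(k+1)/2 - 2`
such that the matrix with entries `α_{i_ℓ}^r - α_{j_ℓ}^r` is invertible. -/
theorem exists_invertible_difference_matrix (q n k : ℕ) (F : Type*) [Field F] [Fintype F]
    (hF : Fintype.card F = q) (hk : 3 ≤ k)
    (α : Fin n → F) (hα : Function.Injective α)
    (hn : k * (k + 1) / 2 - 2 ≤ n) :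
    ∃ i j : Fin (k - 1) → Fin n, StrictMono i ∧ StrictMono j ∧ i ≠ j ∧
      (∀ ℓ : Fin (k - 1), j ℓ < i ℓ ∧ (i ℓ : ℕ) + 1 ≤ k * (k + 1) / 2 - 2) ∧
      (Matrix.of fun r ℓ : Fin (k - 1) =>
        α (i ℓ) ^ ((r : ℕ) + 1) - α (j ℓ) ^ ((r : ℕ) + 1)).det ≠ 0 := by
  have hk' := le_mul_succ_div_two_sub_two hk
  obtain ⟨i, j, hi, hj, hij, hlt, hdet⟩ :=
    exists_invertible_difference_matrix_general (Nat.le_of_succ_le hk) (hk'.trans hn) α hα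
  exact ⟨i, j, hi, hj, hij, fun ℓ => ⟨(hlt ℓ).1, (hlt ℓ).2.trans hk'⟩, hdet⟩
end

section
/- Let C ⊆ Z_q^n be a q-ary Hamming-metric Singleton-optimal code, i.e., |C| = q^{n − d_H(C) + 1}, and set k = n − d_H(C) + 1 (so |C| = q^k). Suppose C contains the zero vector. Then for every subset R ⊆ {1,...,n} with |R| = n − k + 1, there are exactly q − 1 codewords of C whose support is exactly R. -/
/-!
Let `d` be the minimum distance of `C`. Two codewords that agree on `n - d + 1` coordinates differ
in fewer than `d` places, hence coincide: projecting `C` onto any `n - d + 1` coordinates is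
injective, and Singleton-optimality makes it bijective.

Fix a codeword `z`, a set `R` of `d` coordinates and `i ∈ R`, and project onto `insert i Rᶜ`: for
every letter `a` there is exactly one codeword that agrees with `z` off `R` and takes the value `a`
at `i`. If `a ≠ z i`, this codeword differs from `z` everywhere on `R`, since agreement at some
`j ∈ R` would be agreement on `insert j Rᶜ`. So the codewords that differ from `z` exactly on `R`
correspond to the letters `a ≠ z i`; the theorem is the case `z = 0`.
-/

open scoped BigOperators

section Coordinates

variable {ι : Type*} [Fintype ι]

theorem hammingDist_add_card_le_of_forall_mem_eq {β : ι → Type*} [∀ i, DecidableEq (β i)]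
    {u v : ∀ i, β i} {T : Finset ι} (h : ∀ i ∈ T, u i = v i) :
    hammingDist u v + T.card ≤ Fintype.card ι := by
  classical
  rw [← T.card_compl_add_card]
  refine Nat.add_le_add_right (Finset.card_le_card fun i hi => ?_) _
  have hne : u i ≠ v i := (Finset.mem_filter.1 hi).2
  exact Finset.mem_compl.2 fun hiT => hne (h i hiT)

theorem card_insert_compl_add_card [DecidableEq ι] {R : Finset ι} {i : ι} (hi : i ∈ R) :
    (insert i Rᶜ).card + R.card = Fintype.card ι + 1 := by
  rw [Finset.card_insert_of_notMem (by simpa using hi), add_right_comm, R.card_compl_add_card]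

end Coordinates

section HammingDistSet

variable {α : Type*} [DecidableEq α] {n : ℕ} {C : Set (Fin n → α)}

theorem hammingDistSet_le_hammingDist {u v : Fin n → α} (hu : u ∈ C) (hv : v ∈ C) (huv : u ≠ v) :
    hammingDistSet C ≤ hammingDist u v :=
  Nat.sInf_le ⟨u, hu, v, hv, huv, rfl⟩

theorem exists_hammingDist_eq_hammingDistSet (hC : C.Nontrivial) :
    ∃ u ∈ C, ∃ v ∈ C, u ≠ v ∧ hammingDist u v = hammingDistSet C := by
  obtain ⟨u, hu, v, hv, huv⟩ := hC
  exact Nat.sInf_mem (s := {d | ∃ u ∈ C, ∃ v ∈ C, u ≠ v ∧ hammingDist u v = d})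
    ⟨_, u, hu, v, hv, huv, rfl⟩

theorem hammingDistSet_pos (hC : C.Nontrivial) : 0 < hammingDistSet C := by
  obtain ⟨u, -, v, -, huv, h⟩ := exists_hammingDist_eq_hammingDistSet hC
  exact h ▸ hammingDist_pos.2 huv

theorem hammingDistSet_le_length (hC : C.Nontrivial) : hammingDistSet C ≤ n := by
  obtain ⟨u, -, v, -, -, h⟩ := exists_hammingDist_eq_hammingDistSet hC
  simpa [h] using hammingDist_le_card_fintype (x := u) (y := v)

theorem injOn_restrict_of_lt_card_add_hammingDistSet {T : Finset (Fin n)}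
    (hT : n < T.card + hammingDistSet C) : Set.InjOn T.restrict C := by
  intro u hu v hv huv
  by_contra hne
  have hagree : hammingDist u v + T.card ≤ n := by
    simpa using hammingDist_add_card_le_of_forall_mem_eq fun i hi => congrFun huv ⟨i, hi⟩
  have hdist := hammingDistSet_le_hammingDist hu hv hne
  omega

theorem eq_of_eqOn_compl_of_apply_eq {R : Finset (Fin n)} (hR : R.card ≤ hammingDistSet C)
    {u v : Fin n → α} (hu : u ∈ C) (hv : v ∈ C) (huv : Set.EqOn u v (R : Set (Fin n))ᶜ)
    {i : Fin n} (hi : i ∈ R) (hui : u i = v i) : u = v := by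
  have hcard : (insert i Rᶜ).card + R.card = n + 1 := by
    simpa using card_insert_compl_add_card hi
  refine injOn_restrict_of_lt_card_add_hammingDistSet (T := insert i Rᶜ) (by omega) hu hv ?_
  funext ⟨j, hj⟩
  obtain rfl | hj := Finset.mem_insert.1 hj
  · exact hui
  · exact huv (Finset.mem_compl.1 hj)

/-- A code attaining equality in the Hamming-metric Singleton bound. Cardinalities are taken
with `Set.ncard` and `Nat.card`, so the notion is meaningful only for a finite alphabet, and the
minimum distance of a code with fewer than two words is the junk value `0`. -/
def IsSingletonOptimal (C : Set (Fin n → α)) : Prop :=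
  C.ncard = Nat.card α ^ (n - hammingDistSet C + 1)

namespace IsSingletonOptimal

variable [Finite α]

theorem nontrivial [Nontrivial α] (hC : IsSingletonOptimal C) : C.Nontrivial := by
  rw [← Set.one_lt_ncard_iff_nontrivial, hC]
  exact Nat.one_lt_pow (Nat.succ_ne_zero _) Finite.one_lt_card

theorem bijOn_restrict (hC : IsSingletonOptimal C) {T : Finset (Fin n)}
    (hT : T.card = n - hammingDistSet C + 1) : Set.BijOn T.restrict C Set.univ := by
  have hinj : Set.InjOn T.restrict C :=
    injOn_restrict_of_lt_card_add_hammingDistSet (by omega)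
  have himage : T.restrict '' C = Set.univ := by
    rw [Set.eq_univ_iff_ncard, hinj.ncard_image, hC, Nat.card_fun, Nat.card_eq_finsetCard, hT]
  exact himage ▸ hinj.bijOn_image

theorem exists_eqOn_compl_and_apply_eq (hC : IsSingletonOptimal C) {R : Finset (Fin n)}
    (hR : R.card = hammingDistSet C) (z : Fin n → α) {i : Fin n} (hi : i ∈ R) (a : α) :
    ∃ c ∈ C, Set.EqOn c z (R : Set (Fin n))ᶜ ∧ c i = a := by
  have hcard : (insert i Rᶜ).card + R.card = n + 1 := by
    simpa using card_insert_compl_add_card hi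
  have hRn : R.card ≤ n := by simpa using R.card_le_univ
  obtain ⟨c, hc, hca⟩ := (hC.bijOn_restrict (T := insert i Rᶜ) (by omega)).surjOn
    (Set.mem_univ ((insert i Rᶜ).restrict (Function.update z i a)))
  refine ⟨c, hc, fun j hj => ?_, ?_⟩
  · have hji : j ≠ i := fun h => hj (h ▸ hi)
    simpa [hji] using congrFun hca ⟨j, Finset.mem_insert_of_mem (Finset.mem_compl.2 hj)⟩
  · simpa using congrFun hca ⟨i, Finset.mem_insert_self i _⟩

theorem bijOn_apply_compl_singleton (hC : IsSingletonOptimal C) {R : Finset (Fin n)}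
    (hR : R.card = hammingDistSet C) {z : Fin n → α} (hz : z ∈ C) {i : Fin n} (hi : i ∈ R) :
    Set.BijOn (fun c : Fin n → α => c i) {c ∈ C | ∀ j, c j ≠ z j ↔ j ∈ R} {z i}ᶜ := by
  refine ⟨fun c hc => (hc.2 i).2 hi, fun u hu v hv huv => ?_, fun a ha => ?_⟩
  · have heqOn {c : Fin n → α} (hc : ∀ j, c j ≠ z j ↔ j ∈ R) :
        Set.EqOn c z (R : Set (Fin n))ᶜ := fun j hj => not_not.1 (mt (hc j).1 hj)
    exact eq_of_eqOn_compl_of_apply_eq hR.le hu.1 hv.1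
      ((heqOn hu.2).trans (heqOn hv.2).symm) hi huv
  · obtain ⟨c, hc, hcz, rfl⟩ := hC.exists_eqOn_compl_and_apply_eq hR z hi a
    have hne : c ≠ z := fun h => ha (congrFun h i)
    refine ⟨c, ⟨hc, fun j => ⟨fun hcj => ?_, fun hj hcj => ?_⟩⟩, rfl⟩
    · exact by_contra fun hj => hcj (hcz hj)
    · exact hne (eq_of_eqOn_compl_of_apply_eq hR.le hc hz hcz hj hcj)

end IsSingletonOptimal

theorem singleton_optimal_support_count_general [Finite α] [Nontrivial α]
    (hC : IsSingletonOptimal C) {z : Fin n → α} (hz : z ∈ C) {R : Finset (Fin n)}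
    (hR : R.card = hammingDistSet C) :
    {c ∈ C | ∀ i, c i ≠ z i ↔ i ∈ R}.ncard = Nat.card α - 1 := by
  obtain ⟨i, hi⟩ : R.Nonempty := Finset.card_pos.1 (hR ▸ hammingDistSet_pos hC.nontrivial)
  rw [(hC.bijOn_apply_compl_singleton hR hz hi).ncard_eq, Set.ncard_compl, Set.ncard_singleton]

end HammingDistSet

/-- Lemma 3.10: in a `q`-ary Hamming-metric Singleton-optimal code containing `0`,
for every coordinate set `R` of size `n - k + 1` there are exactly `q - 1` codewords
with support exactly `R`. -/
theorem singleton_optimal_support_count (q n k : ℕ) (hq : 2 ≤ q)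
    (C : Finset (Fin n → ZMod q))
    (hzero : (0 : Fin n → ZMod q) ∈ C)
    (hk : k = n - hammingDistSet (C : Set (Fin n → ZMod q)) + 1)
    (hCard : C.card = q ^ k)
    (R : Finset (Fin n)) (hR : R.card = n - k + 1) :
    Set.ncard {c ∈ (C : Set (Fin n → ZMod q)) | ∀ i, (c i ≠ 0 ↔ i ∈ R)} = q - 1 := by
  have : Fact (1 < q) := ⟨hq⟩
  have hC : IsSingletonOptimal (C : Set (Fin n → ZMod q)) := by
    simp [IsSingletonOptimal, hCard, hk]
  have hpos := hammingDistSet_pos hC.nontrivial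
  have hle := hammingDistSet_le_length hC.nontrivial
  simpa using singleton_optimal_support_count_general hC hzero (R := R) (by omega)
end

section
/- For any a, b ∈ J_q(n), the L¹-distance equals the insdel distance of the images under ψ: d_L(a, b) = d_I(ψ(a), ψ(b)). -/
/-!
The longest common subsequence of `ψ(a)` and `ψ(b)` has length `∑ i, min (a i) (b i)`: a common
subsequence of any two words contains each symbol at most as often as either word does, and for
sorted words this bound is attained by the sorted word with `min (a i) (b i)` copies of each
symbol `i`. Now sum `|x - y| + 2 * min x y = x + y` over the coordinates.
-/

open scoped BigOperators

/-- The list consisting of `a 0` copies of `0`, then `a 1` copies of `1`, etc. -/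
def psiList (q : ℕ) (a : Fin q → ℕ) : List (Fin q) :=
  (List.ofFn fun i : Fin q => List.replicate (a i) i).flatten

theorem psiList_length {q n : ℕ} (a : Fin q → ℕ) (ha : ∑ i, a i = n) :
    (psiList q a).length = n := by
  simp [psiList, Function.comp_def, List.sum_ofFn, ha]

/-- The map `ψ : J_q(n) → [q]^n` sending `(a_1,…,a_q)` to the nondecreasing word with
`a_i` copies of the symbol `i`. -/
def psi {q n : ℕ} (a : Fin q → ℕ) (ha : ∑ i, a i = n) : Fin n → Fin q :=
  fun j => (psiList q a).get (Fin.cast (psiList_length a ha).symm j)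

theorem sum_count_eq_length {α : Type*} [Fintype α] [DecidableEq α] (w : List α) :
    ∑ x, w.count x = w.length := by
  simpa only [Multiset.coe_count, Multiset.coe_card] using
    Multiset.sum_count_eq_card (m := (w : Multiset α)) fun x _ => Finset.mem_univ x

section Lcs

variable {α : Type*} {n : ℕ} {u v : Fin n → α}

theorem le_lcsLen {w : List α} (hu : w.Sublist (List.ofFn u)) (hv : w.Sublist (List.ofFn v)) :
    w.length ≤ lcsLen u v := by
  refine le_csSup ⟨n, ?_⟩ ⟨w, rfl, hu, hv⟩
  rintro _ ⟨w', rfl, hu', -⟩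
  simpa only [List.length_ofFn] using hu'.length_le

theorem lcsLen_le_s14 {k : ℕ}
    (h : ∀ w : List α, w.Sublist (List.ofFn u) → w.Sublist (List.ofFn v) → w.length ≤ k) :
    lcsLen u v ≤ k := by
  refine csSup_le ⟨0, [], rfl, List.nil_sublist _, List.nil_sublist _⟩ ?_
  rintro _ ⟨w, rfl, hu, hv⟩
  exact h w hu hv

theorem lcsLen_le_sum_min_count [Fintype α] [DecidableEq α] (u v : Fin n → α) :
    lcsLen u v ≤ ∑ x, min ((List.ofFn u).count x) ((List.ofFn v).count x) := by
  refine lcsLen_le_s14 fun w hu hv => ?_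
  rw [← sum_count_eq_length w]
  exact Finset.sum_le_sum fun x _ => le_min (hu.count_le x) (hv.count_le x)

end Lcs

section Psi

variable {q n : ℕ}

theorem psiList_eq_flatMap (a : Fin q → ℕ) :
    psiList q a = (List.finRange q).flatMap fun i => List.replicate (a i) i := by
  rw [psiList, List.ofFn_eq_map, List.flatMap_def]

theorem count_psiList (a : Fin q → ℕ) (i : Fin q) : (psiList q a).count i = a i := by
  simp [psiList, List.count_flatten, List.map_ofFn, Function.comp_def, List.sum_ofFn,
    List.count_replicate]

theorem psiList_sublist_psiList {a b : Fin q → ℕ} (h : a ≤ b) :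
    (psiList q a).Sublist (psiList q b) := by
  simp only [psiList_eq_flatMap]
  exact List.Sublist.flatMap_right _ fun i _ => (List.replicate_sublist_replicate i).2 (h i)

theorem ofFn_psi (a : Fin q → ℕ) (ha : ∑ i, a i = n) : List.ofFn (psi a ha) = psiList q a :=
  (List.ofFn_congr (psiList_length a ha) (psiList q a).get).symm.trans (List.ofFn_get _)

theorem lcsLen_psi (a b : Fin q → ℕ) (ha : ∑ i, a i = n) (hb : ∑ i, b i = n) :
    lcsLen (psi a ha) (psi b hb) = ∑ i, min (a i) (b i) := by
  apply le_antisymm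
  · simpa only [ofFn_psi, count_psiList] using lcsLen_le_sum_min_count (psi a ha) (psi b hb)
  · have inf_sublist_left : (psiList q (a ⊓ b)).Sublist (List.ofFn (psi a ha)) :=
      ofFn_psi a ha ▸ psiList_sublist_psiList inf_le_left
    have inf_sublist_right : (psiList q (a ⊓ b)).Sublist (List.ofFn (psi b hb)) :=
      ofFn_psi b hb ▸ psiList_sublist_psiList inf_le_right
    calc ∑ i, min (a i) (b i) = (psiList q (a ⊓ b)).length := (psiList_length (a ⊓ b) rfl).symm
      _ ≤ lcsLen (psi a ha) (psi b hb) := le_lcsLen inf_sublist_left inf_sublist_right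

end Psi

theorem dist_add_two_mul_min (x y : ℕ) : Nat.dist x y + 2 * min x y = x + y := by
  unfold Nat.dist
  omega

theorem sum_dist_add_two_mul_sum_min {ι : Type*} (s : Finset ι) (f g : ι → ℕ) :
    ∑ i ∈ s, Nat.dist (f i) (g i) + 2 * ∑ i ∈ s, min (f i) (g i) =
      ∑ i ∈ s, f i + ∑ i ∈ s, g i := by
  simp only [Finset.mul_sum, ← Finset.sum_add_distrib, dist_add_two_mul_min]

/-- Lemma 4.1: for `a, b ∈ J_q(n)`, the `L¹`-distance equals the insdel distance of the
images under `ψ`. -/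
theorem L1_dist_eq_insdel_psi (q n : ℕ) (hq : 2 ≤ q) (hn : 1 ≤ n)
    (a b : Fin q → ℕ) (ha : ∑ i, a i = n) (hb : ∑ i, b i = n) :
    ∑ i, Nat.dist (a i) (b i) = insdelDist (psi a ha) (psi b hb) := by
  have dist_add_lcs : ∑ i, Nat.dist (a i) (b i) + 2 * lcsLen (psi a ha) (psi b hb) = 2 * n := by
    rw [lcsLen_psi, sum_dist_add_two_mul_sum_min, ha, hb, two_mul]
  exact Nat.eq_sub_of_add_eq dist_add_lcs
end

section
/- If A ⊆ J_q(n) is a constant-weight L¹-code of size M with at least two elements and minimum L¹-distance d = 2δ, then there exists a code C ⊆ [q]^n of size M with insdel distance d = 2δ; indeed, C = ψ(A) has these parameters. -/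
open scoped BigOperators

/-!
Identify a nondecreasing word with the multiset of its letters. Every common subsequence of two
words is contained in the intersection of their multisets, and for nondecreasing words that
intersection, sorted, is a common subsequence. So their LCS has length `∑ min (a_i, b_i)`, where
`a` and `b` are the letter counts, and `|x - y| = x + y - 2 min (x, y)` turns the insdel distance
into the `L¹`-distance of `a` and `b`. Since `ψ(a)` is the nondecreasing word with letter counts
`a`, the map `ψ` is an isometric embedding.
-/

section Words

variable {α : Type*} {n : ℕ}

theorem lcsLen_eq_card_inter_of_monotone [LinearOrder α] {u v : Fin n → α}
    (hu : Monotone u) (hv : Monotone v) :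
    lcsLen u v = ((List.ofFn u : Multiset α) ∩ (List.ofFn v : Multiset α)).card := by
  set common := (List.ofFn u : Multiset α) ∩ (List.ofFn v : Multiset α)
  have sort_sublist {w : Fin n → α} (hw : Monotone w)
      (hle : common ≤ (List.ofFn w : Multiset α)) : common.sort.Sublist (List.ofFn w) := by
    refine List.sublist_of_subperm_of_sortedLE ?_
      (common.pairwise_sort (· ≤ ·)).sortedLE hw.sortedLE_ofFn
    rwa [← Multiset.coe_le, Multiset.sort_eq]
  refine IsGreatest.csSup_eq ⟨⟨common.sort, common.length_sort _,
    sort_sublist hu Multiset.inter_le_left, sort_sublist hv Multiset.inter_le_right⟩, ?_⟩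
  rintro _ ⟨w, rfl, hwu, hwv⟩
  have hw : (w : Multiset α) ≤ common :=
    Multiset.le_inter (Multiset.coe_le.2 hwu.subperm) (Multiset.coe_le.2 hwv.subperm)
  exact Multiset.card_le_card hw

/-- The Parikh vector of a word: the number of occurrences of each letter. On nondecreasing words
it is the inverse of `ψ`. -/
def letterCount [DecidableEq α] (u : Fin n → α) (i : α) : ℕ :=
  (List.ofFn u).count i

theorem sum_letterCount [DecidableEq α] [Fintype α] (u : Fin n → α) :
    ∑ i, letterCount u i = n := by
  simpa [letterCount] using Multiset.sum_count_eq_card (s := Finset.univ)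
    (m := (List.ofFn u : Multiset α)) fun i _ => Finset.mem_univ i

theorem lcsLen_eq_sum_min_letterCount_of_monotone [LinearOrder α] [Fintype α] {u v : Fin n → α}
    (hu : Monotone u) (hv : Monotone v) :
    lcsLen u v = ∑ i, min (letterCount u i) (letterCount v i) := by
  rw [lcsLen_eq_card_inter_of_monotone hu hv,
    ← Multiset.sum_count_eq_card fun i _ => Finset.mem_univ i]
  simp only [Multiset.count_inter, Multiset.coe_count, letterCount]

end Words

section L1Distance

variable {ι : Type*}

theorem sum_natDist_add_two_mul_sum_min (s : Finset ι) (a b : ι → ℕ) :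
    ∑ i ∈ s, Nat.dist (a i) (b i) + 2 * ∑ i ∈ s, min (a i) (b i) =
      ∑ i ∈ s, a i + ∑ i ∈ s, b i := by
  rw [Finset.mul_sum, ← Finset.sum_add_distrib, ← Finset.sum_add_distrib]
  refine Finset.sum_congr rfl fun i _ => ?_
  rw [Nat.dist]
  omega

variable [Fintype ι]

/-- The `L¹`-distance of two vectors of natural numbers. -/
def l1Dist (a b : ι → ℕ) : ℕ :=
  ∑ i, Nat.dist (a i) (b i)

/-- The minimum `L¹`-distance `d_L` of a set of vectors of natural numbers; it is `0` if the set
has fewer than two elements. -/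
noncomputable def l1DistSet (A : Set (ι → ℕ)) : ℕ :=
  sInf {d : ℕ | ∃ a ∈ A, ∃ b ∈ A, a ≠ b ∧ l1Dist a b = d}

end L1Distance

theorem insdelDist_eq_l1Dist_letterCount_of_monotone {α : Type*} [LinearOrder α] [Fintype α]
    {n : ℕ} {u v : Fin n → α} (hu : Monotone u) (hv : Monotone v) :
    insdelDist u v = l1Dist (letterCount u) (letterCount v) := by
  have h := sum_natDist_add_two_mul_sum_min Finset.univ (letterCount u) (letterCount v)
  rw [sum_letterCount, sum_letterCount] at h
  rw [insdelDist, lcsLen_eq_sum_min_letterCount_of_monotone hu hv, l1Dist]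
  omega

theorem insdelDistSet_range {ι α : Type*} {n : ℕ} {f : ι → Fin n → α}
    (hf : Function.Injective f) :
    insdelDistSet (Set.range f) = sInf {d : ℕ | ∃ a b, a ≠ b ∧ insdelDist (f a) (f b) = d} := by
  simp only [insdelDistSet, Set.exists_range_iff, hf.ne_iff]

section Psi

variable {q n : ℕ}

theorem sortedLE_psiList (a : Fin q → ℕ) : (psiList q a).SortedLE := by
  refine List.Pairwise.sortedLE (List.pairwise_flatten.2 ⟨?_, ?_⟩)
  · simp [List.pairwise_replicate]
  · rw [List.pairwise_ofFn]
    intro i j hij x hx y hy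
    rw [List.eq_of_mem_replicate hx, List.eq_of_mem_replicate hy]
    exact hij.le

theorem monotone_psi (a : Fin q → ℕ) (ha : ∑ i, a i = n) : Monotone (psi a ha) := by
  rw [← List.sortedLE_ofFn_iff, ofFn_psi]
  exact sortedLE_psiList a

theorem letterCount_psi (a : Fin q → ℕ) (ha : ∑ i, a i = n) : letterCount (psi a ha) = a := by
  funext i
  rw [letterCount, ofFn_psi, count_psiList]

theorem psi_injective {a b : Fin q → ℕ} (ha : ∑ i, a i = n) (hb : ∑ i, b i = n)
    (h : psi a ha = psi b hb) : a = b := by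
  rw [← letterCount_psi a ha, h, letterCount_psi]

theorem insdelDist_psi (a b : Fin q → ℕ) (ha : ∑ i, a i = n) (hb : ∑ i, b i = n) :
    insdelDist (psi a ha) (psi b hb) = l1Dist a b := by
  rw [insdelDist_eq_l1Dist_letterCount_of_monotone (monotone_psi a ha) (monotone_psi b hb),
    letterCount_psi, letterCount_psi]

variable (A : Finset (Fin q → ℕ)) (hA : ∀ a ∈ A, ∑ i, a i = n)

/-- The embedding of a constant-weight code `A` into `[q]^n` given by `ψ`. Its domain is the
subtype of `A` because `psi` takes the weight of its argument as a proof. -/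
def psiEmbedding : A ↪ (Fin n → Fin q) where
  toFun a := psi a.1 (hA a.1 a.2)
  inj' _ _ h := Subtype.ext (psi_injective _ _ h)

/-- The code `ψ(A)`. -/
def psiCode : Finset (Fin n → Fin q) :=
  A.attach.map (psiEmbedding A hA)

theorem card_psiCode : (psiCode A hA).card = A.card := by
  rw [psiCode, Finset.card_map, Finset.card_attach]

theorem coe_psiCode : (psiCode A hA : Set (Fin n → Fin q)) = Set.range (psiEmbedding A hA) := by
  simp [psiCode]

theorem insdelDistSet_psiCode :
    insdelDistSet (psiCode A hA : Set (Fin n → Fin q)) = l1DistSet (A : Set (Fin q → ℕ)) := by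
  have isometry (a b : A) :
      insdelDist (psiEmbedding A hA a) (psiEmbedding A hA b) = l1Dist a.1 b.1 :=
    insdelDist_psi a.1 b.1 (hA a.1 a.2) (hA b.1 b.2)
  rw [coe_psiCode, insdelDistSet_range (psiEmbedding A hA).injective, l1DistSet]
  simp [isometry, and_assoc]

end Psi

/-- Corollary 4.2: a constant-weight `L¹`-code of size `M` and minimum `L¹`-distance `2δ`
yields a code in `[q]^n` of size `M` and insdel distance `2δ`. -/
theorem insdel_code_from_L1_code (q n δ M : ℕ) (hq : 2 ≤ q) (hn : 1 ≤ n)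
    (A : Finset (Fin q → ℕ)) (hA : ∀ a ∈ A, ∑ i, a i = n)
    (hM : A.card = M) (h2 : 2 ≤ A.card)
    (hdist : sInf {d : ℕ | ∃ a ∈ A, ∃ b ∈ A, a ≠ b ∧ ∑ i, Nat.dist (a i) (b i) = d}
      = 2 * δ) :
    ∃ C : Finset (Fin n → Fin q), C.card = M ∧
      insdelDistSet (C : Set (Fin n → Fin q)) = 2 * δ :=
  ⟨psiCode A hA, (card_psiCode A hA).trans hM, (insdelDistSet_psiCode A hA).trans hdist⟩
end

section
/- Let q ≥ 2 be an integer and let r be a prime power with r > q. Then for any integers n ≥ 1 and δ ≥ 2, there exists a constant-weight L¹-code A ⊆ J_q(n) of size |A| ≥ C(n+q−1, n) / (r^{δ−2}(r−1)) (where C(a,b) is the binomial coefficient) whose L¹-distance between any two distinct elements is at least 2δ. -/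
open scoped BigOperators

open Finset Polynomial

/-!
Let `F` be the field with `r` elements. As `q ≤ r - 1`, one can choose distinct nonzero
`α₁, …, α_q ∈ F`, and the polynomial `P_a = ∏ (X - αᵢ)^{aᵢ}` then determines `a ∈ J_q(n)`. Its
residue modulo `X^{δ-1}` has nonzero constant coefficient, so it takes at most `(r-1) r^{δ-2}`
values, and the largest class of vectors with a common residue is the code.

If `a` and `b` have the same residue, cancel the common factor `∏ (X - αᵢ)^{min(aᵢ, bᵢ)}`, which
is prime to `X`. What remains of `P_a` and `P_b` are two monic polynomials whose degree is half the
`L¹`-distance of `a` and `b`. They are congruent modulo `X^{δ-1}`, so if this degree is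
less than `δ` they have all coefficients in common, and `a = b`.
-/

section NatVectors

variable {ι : Type*} {s : Finset ι} {a b : ι → ℕ}

lemma inf_add_tsub_eq_left (a b : ι → ℕ) : a ⊓ b + (a - b) = a := by
  ext i
  exact (add_comm _ _).trans tsub_add_min

lemma eq_of_tsub_eq_tsub (h : a - b = b - a) : a = b := by
  ext i
  have hi : a i - b i = b i - a i := congrFun h i
  omega

lemma sum_tsub_comm_of_sum_eq (h : ∑ i ∈ s, a i = ∑ i ∈ s, b i) :
    ∑ i ∈ s, (a i - b i) = ∑ i ∈ s, (b i - a i) := by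
  have hmax : ∑ i ∈ s, (a i - b i) + ∑ i ∈ s, b i = ∑ i ∈ s, (b i - a i) + ∑ i ∈ s, a i := by
    simp only [← sum_add_distrib, tsub_add_eq_max, max_comm]
  omega

lemma sum_natDist_eq_two_mul_sum_tsub (h : ∑ i ∈ s, a i = ∑ i ∈ s, b i) :
    ∑ i ∈ s, Nat.dist (a i) (b i) = 2 * ∑ i ∈ s, (a i - b i) := by
  simp only [Nat.dist, sum_add_distrib, ← sum_tsub_comm_of_sum_eq h, two_mul]

end NatVectors

section Counting

lemma card_piAntidiag_univ_nat {ι : Type*} [Fintype ι] [DecidableEq ι] (n : ℕ) :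
    #(piAntidiag (univ : Finset ι) n) = (Fintype.card ι + n - 1).choose n := by
  rw [← map_sym_eq_piAntidiag, card_map, sym_univ, card_univ, Sym.card_sym_eq_choose]

lemma exists_card_div_natCard_le_card_fiber {K σ τ : Type*} [Field K] [LinearOrder K]
    [IsStrictOrderedRing K] [Finite τ] [Nonempty τ] [DecidableEq τ] (s : Finset σ) (f : σ → τ) :
    ∃ c, (#s / Nat.card τ : K) ≤ #{a ∈ s | f a = c} := by
  have := Fintype.ofFinite τ
  obtain ⟨c, -, hc⟩ := exists_le_card_fiber_of_nsmul_le_card_of_maps_to (s := s) (f := f)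
    (b := (#s / Nat.card τ : K)) (fun _ _ => mem_univ _) univ_nonempty (by
      rw [card_univ, ← Nat.card_eq_fintype_card, nsmul_eq_mul,
        mul_div_cancel₀ _ (Nat.cast_ne_zero.mpr Nat.card_pos.ne')])
  exact ⟨c, hc⟩

lemma natCard_units_prod_pi {F K : Type*} [GroupWithZero F] [Finite F] [Ring K] (k : ℕ) :
    (Nat.card (Fˣ × (Fin k → F)) : K) = Nat.card F ^ k * (Nat.card F - 1) := by
  rw [Nat.card_prod, Nat.card_units, Nat.card_fun, Nat.card_fin, mul_comm, Nat.cast_mul,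
    Nat.cast_pow, Nat.cast_pred Nat.card_pos]

end Counting

lemma eq_of_isMonicOfDegree_of_X_pow_dvd_sub {R : Type*} [Ring R] {f g : R[X]} {d k : ℕ}
    (hf : IsMonicOfDegree f d) (hg : IsMonicOfDegree g d) (hdk : d ≤ k) (h : X ^ k ∣ f - g) :
    f = g := by
  ext j
  obtain hj | hj := lt_or_ge j k
  · exact sub_eq_zero.mp (coeff_sub f g j ▸ X_pow_dvd_iff.mp h j hj)
  · exact hf.coeff_eq hg (hdk.trans hj)

/-- The monic polynomial `∏ (X - αᵢ)^{aᵢ}`. When the `αᵢ` are distinct it encodes the exponent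
vector `a` as its root multiplicities. -/
noncomputable def rootPoly {ι R : Type*} [Fintype ι] [CommRing R] (α : ι → R) (a : ι → ℕ) : R[X] :=
  ∏ i, (X - C (α i)) ^ a i

section RootPoly

variable {ι R : Type*} [Fintype ι] [CommRing R] (α : ι → R)

lemma rootPoly_add (a b : ι → ℕ) : rootPoly α (a + b) = rootPoly α a * rootPoly α b := by
  simp only [rootPoly, Pi.add_apply, pow_add, prod_mul_distrib]

lemma rootPoly_sub_rootPoly (a b : ι → ℕ) :
    rootPoly α a - rootPoly α b
      = rootPoly α (a ⊓ b) * (rootPoly α (a - b) - rootPoly α (b - a)) := by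
  rw [mul_sub, ← rootPoly_add, ← rootPoly_add, inf_add_tsub_eq_left, inf_comm,
    inf_add_tsub_eq_left]

lemma coeff_zero_rootPoly (a : ι → ℕ) : (rootPoly α a).coeff 0 = ∏ i, (-α i) ^ a i := by
  simp [rootPoly, coeff_zero_eq_eval_zero, eval_prod]

lemma isMonicOfDegree_rootPoly [Nontrivial R] (a : ι → ℕ) :
    IsMonicOfDegree (rootPoly α a) (∑ i, a i) := by
  have hmonic : ∀ i ∈ univ, ((X - C (α i)) ^ a i).Monic := fun i _ => (monic_X_sub_C (α i)).pow _
  refine ⟨?_, monic_prod_of_monic _ _ hmonic⟩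
  simp [rootPoly, natDegree_prod_of_monic _ _ hmonic, (monic_X_sub_C _).natDegree_pow]

variable [IsDomain R] {α}

lemma count_roots_rootPoly [DecidableEq R] (hα : Function.Injective α) (a : ι → ℕ) (i : ι) :
    (rootPoly α a).roots.count (α i) = a i := by
  classical
  rw [rootPoly, roots_prod _ _ (isMonicOfDegree_rootPoly α a).ne_zero]
  simp [Multiset.count_bind, Multiset.count_singleton, hα.eq_iff]

lemma rootPoly_injective (hα : Function.Injective α) : Function.Injective (rootPoly α) := by
  classical
  intro a b h
  funext i
  rw [← count_roots_rootPoly hα a i, h, count_roots_rootPoly hα b i]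

lemma not_X_dvd_rootPoly (hα : ∀ i, α i ≠ 0) (a : ι → ℕ) : ¬ X ∣ rootPoly α a := by
  rw [X_dvd_iff, coeff_zero_rootPoly]
  exact prod_ne_zero_iff.mpr fun i _ => pow_ne_zero _ (neg_ne_zero.mpr (hα i))

lemma X_pow_dvd_rootPoly_tsub_sub (hα : ∀ i, α i ≠ 0) {a b : ι → ℕ} {k : ℕ}
    (h : X ^ k ∣ rootPoly α a - rootPoly α b) :
    X ^ k ∣ rootPoly α (a - b) - rootPoly α (b - a) := by
  rw [rootPoly_sub_rootPoly] at h
  exact prime_X.pow_dvd_of_dvd_mul_left k (not_X_dvd_rootPoly hα _) h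

lemma le_sum_natDist_of_X_pow_dvd_rootPoly_sub (hα : Function.Injective α) (hα0 : ∀ i, α i ≠ 0)
    {a b : ι → ℕ} {k : ℕ} (hsum : ∑ i, a i = ∑ i, b i) (hab : a ≠ b)
    (h : X ^ k ∣ rootPoly α a - rootPoly α b) : 2 * (k + 1) ≤ ∑ i, Nat.dist (a i) (b i) := by
  rw [sum_natDist_eq_two_mul_sum_tsub hsum]
  by_contra! hlt
  have hdeg : ∑ i, (a i - b i) ≤ k := by omega
  have hmonic : IsMonicOfDegree (rootPoly α (b - a)) (∑ i, (a i - b i)) :=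
    sum_tsub_comm_of_sum_eq hsum ▸ isMonicOfDegree_rootPoly α (b - a)
  have hpoly : rootPoly α (a - b) = rootPoly α (b - a) :=
    eq_of_isMonicOfDegree_of_X_pow_dvd_sub (isMonicOfDegree_rootPoly α (a - b)) hmonic hdeg
      (X_pow_dvd_rootPoly_tsub_sub hα0 h)
  exact hab (eq_of_tsub_eq_tsub (rootPoly_injective hα hpoly))

end RootPoly

/-- The residue of `rootPoly α a` modulo `X ^ (k + 1)`, by which the vectors `a` are sorted into
codes. It is encoded as the constant coefficient, a unit because the `αᵢ` are, paired with the
coefficients of degrees `1, …, k`. -/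
noncomputable def rootPolyResidue {ι R : Type*} [Fintype ι] [CommRing R] (α : ι → Rˣ) (k : ℕ)
    (a : ι → ℕ) : Rˣ × (Fin k → R) :=
  (∏ i, (-α i) ^ a i, fun j => (rootPoly (fun i => (α i : R)) a).coeff (j + 1))

lemma X_pow_dvd_rootPoly_sub_of_rootPolyResidue_eq {ι R : Type*} [Fintype ι] [CommRing R]
    {α : ι → Rˣ} {k : ℕ} {a b : ι → ℕ} (h : rootPolyResidue α k a = rootPolyResidue α k b) :
    X ^ (k + 1) ∣ rootPoly (fun i => (α i : R)) a - rootPoly (fun i => (α i : R)) b := by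
  obtain ⟨hzero, hsucc⟩ := Prod.ext_iff.mp h
  rw [X_pow_dvd_iff]
  rintro (_ | j) hj <;> rw [coeff_sub, sub_eq_zero]
  · simpa [rootPolyResidue, coeff_zero_rootPoly] using congrArg Units.val hzero
  · exact congrFun hsucc ⟨j, Nat.lt_of_succ_lt_succ hj⟩

lemma exists_subset_piAntidiag_of_embedding_units {ι F : Type*} [Fintype ι] [DecidableEq ι]
    [Field F] [Finite F] (α : ι ↪ Fˣ) (n k : ℕ) :
    ∃ A ⊆ piAntidiag (univ : Finset ι) n,
      ((Fintype.card ι + n - 1).choose n : ℝ) / (Nat.card F ^ k * (Nat.card F - 1)) ≤ #A ∧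
      ∀ a ∈ A, ∀ b ∈ A, a ≠ b → 2 * (k + 2) ≤ ∑ i, Nat.dist (a i) (b i) := by
  classical
  obtain ⟨c, hc⟩ := exists_card_div_natCard_le_card_fiber (K := ℝ)
    (piAntidiag (univ : Finset ι) n) (rootPolyResidue α k)
  rw [card_piAntidiag_univ_nat, natCard_units_prod_pi] at hc
  refine ⟨_, filter_subset _ _, hc, fun a ha b hb hab => ?_⟩
  obtain ⟨han, hac⟩ := mem_filter.mp ha
  obtain ⟨hbn, hbc⟩ := mem_filter.mp hb
  have hsum : ∑ i, a i = ∑ i, b i :=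
    (mem_piAntidiag.mp han).1.trans (mem_piAntidiag.mp hbn).1.symm
  exact le_sum_natDist_of_X_pow_dvd_rootPoly_sub (Units.val_injective.comp α.injective)
    (fun i => (α i).ne_zero) hsum hab
    (X_pow_dvd_rootPoly_sub_of_rootPolyResidue_eq (hac.trans hbc.symm))

/-- Lemma 4.3: for a prime power `r > q`, there is a constant-weight `L¹`-code in `J_q(n)`
of size at least `C(n+q-1, n)/(r^(δ-2)(r-1))` and minimum `L¹`-distance at least `2δ`. -/
theorem exists_constant_weight_L1_code (q r n δ : ℕ) (hq : 2 ≤ q) (hr : q < r)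
    (hrpp : ∃ p m : ℕ, p.Prime ∧ 0 < m ∧ r = p ^ m)
    (hn : 1 ≤ n) (hδ : 2 ≤ δ) :
    ∃ A : Finset (Fin q → ℕ), (∀ a ∈ A, ∑ i, a i = n) ∧
      ((Nat.choose (n + q - 1) n : ℝ)) / ((r : ℝ) ^ (δ - 2) * ((r : ℝ) - 1)) ≤ (A.card : ℝ) ∧
      ∀ a ∈ A, ∀ b ∈ A, a ≠ b → 2 * δ ≤ ∑ i, Nat.dist (a i) (b i) := by
  obtain ⟨p, m, hp, hm, hrpm⟩ := hrpp
  have : Fact p.Prime := ⟨hp⟩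
  have hF : Nat.card (GaloisField p m) = r := (GaloisField.card p m hm.ne').trans hrpm.symm
  have : Fintype (GaloisField p m)ˣ := Fintype.ofFinite _
  obtain ⟨α⟩ : Nonempty (Fin q ↪ (GaloisField p m)ˣ) := by
    rw [Function.Embedding.nonempty_iff_card_le, Fintype.card_fin, ← Nat.card_eq_fintype_card,
      Nat.card_units, hF]
    exact Nat.le_pred_of_lt hr
  obtain ⟨A, hA, hcard, hdist⟩ := exists_subset_piAntidiag_of_embedding_units α n (δ - 2)
  rw [Fintype.card_fin, add_comm q, hF] at hcard
  rw [Nat.sub_add_cancel hδ] at hdist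
  exact ⟨A, fun a ha => (mem_piAntidiag.mp (hA ha)).1, hcard, hdist⟩
end

section
/- For any integers q ≥ 2 and n ≥ δ ≥ 2, there exists a code C ⊆ [q]^n of size |C| ≥ C(n+q−1, n) / ((2q+2)^{δ−2}(2q+1)) (where C(a,b) is the binomial coefficient) whose insdel distance between any two distinct codewords is at least 2δ. -/
/-!
There are `C(n+q-1, n)` multisets of `n` letters, and choosing one word with each such multiset as
its letter content embeds them into the words of length `n`. The letters of a common subsequence
of two words form a common sub-multiset of their contents, so it suffices to find many multisets of
size `n` on `q` letters, no two distinct ones of which share a sub-multiset of size `n - t`, where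
`t = δ - 1`.

By Bertrand's postulate there is a prime `p` with `q < p ≤ 2q`, so that the letters embed as
nonzero elements of `ZMod p`. Attach to a multiset `A` the polynomial `P_A = ∏_{a ∈ A} (X - a)`
and record its residue modulo `X ^ t`, which takes at most `p ^ t ≤ (2q) ^ (δ - 1)` values. If
`P_A ≡ P_B` and `A`, `B` share a sub-multiset `W` with `|A| ≤ |W| + t`, then `P_W` is coprime to
`X`, so it cancels: the remaining two polynomials are monic of the same degree at most `t` and
congruent modulo `X ^ t`, hence equal, and unique factorisation gives `A = B`. One word for each
multiset in the most popular residue class makes up the code.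
-/

open scoped BigOperators

/-- The letter content of a word: the multiset of its letters, with their order forgotten. -/
def letterContent {α : Type*} {n : ℕ} (u : Fin n → α) : Sym α n :=
  ⟨List.ofFn u, by simp⟩

lemma letterContent_surjective {α : Type*} {n : ℕ} :
    Function.Surjective (letterContent : (Fin n → α) → Sym α n) := by
  rintro ⟨⟨l⟩, rfl⟩
  exact ⟨l.get, Subtype.ext (congrArg Multiset.ofList (List.ofFn_get l))⟩

lemma lcsLen_le_card_inter {α : Type*} [DecidableEq α] {n : ℕ} (u v : Fin n → α) :
    lcsLen u v ≤ ((letterContent u : Multiset α) ∩ letterContent v).card := by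
  refine csSup_le ⟨0, [], by simp⟩ ?_
  rintro _ ⟨w, rfl, hwu, hwv⟩
  exact Multiset.card_le_card (Multiset.le_inter hwu.subperm hwv.subperm : (w : Multiset α) ≤ _)

lemma exists_finset_injOn_of_surjective {ι σ κ : Type*} [Fintype σ] [Fintype κ] [Nonempty κ]
    {f : ι → σ} (hf : Function.Surjective f) (φ : σ → κ) :
    ∃ C : Finset ι, Fintype.card σ ≤ Fintype.card κ * C.card ∧ Set.InjOn f C ∧
      ∃ y, ∀ i ∈ C, φ (f i) = y := by
  classical
  obtain ⟨y, hy⟩ : ∃ y, (Fintype.card σ / Fintype.card κ : ℚ) ≤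
      (Finset.univ.filter fun s => φ s = y).card :=
    Fintype.exists_le_card_fiber_of_nsmul_le_card φ
      (by rw [nsmul_eq_mul, mul_div_cancel₀ _ (by positivity)])
  refine ⟨(Finset.univ.filter fun s => φ s = y).map
    ⟨Function.surjInv hf, Function.injective_surjInv hf⟩, ?_, ?_, y, ?_⟩
  · rw [div_le_iff₀' (by positivity)] at hy
    rw [Finset.card_map]
    exact_mod_cast hy
  · simp +contextual [Set.InjOn, Function.surjInv_eq]
  · simp [Function.surjInv_eq]

section Syndrome

open Polynomial

variable {R : Type*} [CommRing R]

lemma eq_of_monic_of_dvd_sub {D P Q : R[X]} (hD : D.Monic) (hP : P.Monic) (hQ : Q.Monic)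
    (hPQ : P.natDegree = Q.natDegree) (hPD : P.natDegree ≤ D.natDegree) (hdvd : D ∣ P - Q) :
    P = Q := by
  nontriviality R
  have hlt : (P - Q).degree < P.degree :=
    degree_sub_lt_left (by rw [degree_eq_natDegree hP.ne_zero, degree_eq_natDegree hQ.ne_zero, hPQ])
      hP.ne_zero (by rw [hP.leadingCoeff, hQ.leadingCoeff])
  by_contra hne
  have hne' : P - Q ≠ 0 := sub_ne_zero.2 hne
  exact hD.not_dvd_of_natDegree_lt hne' ((natDegree_lt_natDegree hne' hlt).trans_le hPD) hdvd

/-- The syndrome of a multiset `A`: the residue of `∏_{a ∈ A} (X - a)` modulo `X ^ t`, encoded by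
its coefficients of index less than `t`. The code consists of words whose letter contents have the
same syndrome. -/
noncomputable def syndrome (t : ℕ) (A : Multiset R) (i : Fin t) : R :=
  (A.map fun a => X - C a).prod.coeff i

lemma X_pow_dvd_sub_of_syndrome_eq {t : ℕ} {A B : Multiset R} (h : syndrome t A = syndrome t B) :
    (X : R[X]) ^ t ∣ (A.map fun a => X - C a).prod - (B.map fun a => X - C a).prod := by
  rw [X_pow_dvd_iff]
  intro d hd
  rw [coeff_sub, sub_eq_zero]
  exact congrFun h ⟨d, hd⟩

variable [IsDomain R]

lemma not_X_dvd_prod_X_sub_C {W : Multiset R} (h0 : (0 : R) ∉ W) :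
    ¬ (X : R[X]) ∣ (W.map fun a => X - C a).prod := by
  rwa [X_dvd_iff, coeff_zero_eq_eval_zero, ← IsRoot.def,
    ← mem_roots (monic_multisetProd_X_sub_C W).ne_zero, roots_multiset_prod_X_sub_C]

lemma eq_of_syndrome_eq {t : ℕ} {A B W : Multiset R} (hAB : A.card = B.card) (hWA : W ≤ A)
    (hWB : W ≤ B) (h0 : (0 : R) ∉ W) (hW : A.card ≤ W.card + t)
    (hsyn : syndrome t A = syndrome t B) : A = B := by
  obtain ⟨A', rfl⟩ := Multiset.le_iff_exists_add.1 hWA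
  obtain ⟨B', rfl⟩ := Multiset.le_iff_exists_add.1 hWB
  have hdvd := X_pow_dvd_sub_of_syndrome_eq hsyn
  simp only [Multiset.card_add, Multiset.map_add, Multiset.prod_add, ← mul_sub] at hAB hW hdvd
  have hcancel : (X : R[X]) ^ t ∣ (A'.map fun a => X - C a).prod - (B'.map fun a => X - C a).prod :=
    prime_X.pow_dvd_of_dvd_mul_left t (not_X_dvd_prod_X_sub_C h0) hdvd
  have hprod : (A'.map fun a => X - C a).prod = (B'.map fun a => X - C a).prod := by
    refine eq_of_monic_of_dvd_sub (monic_X_pow t) (monic_multisetProd_X_sub_C A')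
      (monic_multisetProd_X_sub_C B') ?_ ?_ hcancel
    · rw [natDegree_multiset_prod_X_sub_C_eq_card, natDegree_multiset_prod_X_sub_C_eq_card]
      omega
    · rw [natDegree_multiset_prod_X_sub_C_eq_card, natDegree_X_pow]
      omega
  rw [← roots_multiset_prod_X_sub_C A', hprod, roots_multiset_prod_X_sub_C]

end Syndrome

section Code

variable {α R : Type*} [CommRing R] [IsDomain R]

lemma two_mul_succ_le_insdelDist {n t : ℕ} {a : α → R} (ha : Function.Injective a)
    (ha0 : ∀ x, a x ≠ 0) {u v : Fin n → α} (hne : letterContent u ≠ letterContent v)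
    (hsyn : syndrome t ((letterContent u : Multiset α).map a) =
      syndrome t ((letterContent v : Multiset α).map a)) :
    2 * (t + 1) ≤ insdelDist u v := by
  classical
  contrapose! hne with hlt
  have hlcs : n ≤ lcsLen u v + t := by
    unfold insdelDist at hlt
    omega
  have hcommon : n ≤ ((letterContent u : Multiset α) ∩ letterContent v).card + t :=
    hlcs.trans (Nat.add_le_add_right (lcsLen_le_card_inter u v) t)
  refine Subtype.ext (Multiset.map_injective ha (eq_of_syndrome_eq ?_
    (Multiset.map_le_map Multiset.inter_le_left) (Multiset.map_le_map Multiset.inter_le_right)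
    ?_ ?_ hsyn))
  · rw [Multiset.card_map, Multiset.card_map, (letterContent u).2, (letterContent v).2]
  · simp [ha0]
  · rwa [Multiset.card_map, Multiset.card_map, (letterContent u).2]

variable [Fintype α] [Fintype R]

theorem exists_insdel_code_of_card_lt_card (h : Fintype.card α < Fintype.card R) (n t : ℕ) :
    ∃ C : Finset (Fin n → α),
      (n + Fintype.card α - 1).choose n ≤ Fintype.card R ^ t * C.card ∧
      ∀ u ∈ C, ∀ v ∈ C, u ≠ v → 2 * (t + 1) ≤ insdelDist u v := by
  classical
  obtain ⟨a⟩ : Nonempty (α ↪ {x : R // x ≠ 0}) :=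
    Function.Embedding.nonempty_of_card_le (by simpa using Nat.le_sub_one_of_lt h)
  obtain ⟨C, hcard, hinj, y, hy⟩ := exists_finset_injOn_of_surjective
    (letterContent_surjective (α := α) (n := n))
    fun s => syndrome t ((s : Multiset α).map fun x => (a x : R))
  refine ⟨C, ?_, fun u hu v hv huv => two_mul_succ_le_insdelDist
    (Subtype.val_injective.comp a.injective) (fun x => (a x).2) (hinj.ne hu hv huv)
    ((hy u hu).trans (hy v hv).symm)⟩
  simpa [Sym.card_sym_eq_choose, add_comm] using hcard

theorem exists_good_insdel_code_general (α : Type*) [Fintype α] [Nonempty α] (n t : ℕ) :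
    ∃ C : Finset (Fin n → α),
      ((n + Fintype.card α - 1).choose n : ℝ) / (2 * (Fintype.card α : ℝ)) ^ t ≤ C.card ∧
      ∀ u ∈ C, ∀ v ∈ C, u ≠ v → 2 * (t + 1) ≤ insdelDist u v := by
  obtain ⟨p, hp, hlt, hle⟩ :=
    Nat.exists_prime_lt_and_le_two_mul (Fintype.card α) Fintype.card_ne_zero
  have : Fact p.Prime := ⟨hp⟩
  obtain ⟨C, hcard, hdist⟩ :=
    exists_insdel_code_of_card_lt_card (α := α) (R := ZMod p) (by rwa [ZMod.card]) n t
  have hcard' : (n + Fintype.card α - 1).choose n ≤ (2 * Fintype.card α) ^ t * C.card := by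
    rw [ZMod.card] at hcard
    exact hcard.trans (by gcongr)
  exact ⟨C, (div_le_iff₀' (by positivity)).2 (by exact_mod_cast hcard'), hdist⟩

end Code

lemma two_mul_pow_succ_le {K : Type*} [CommRing K] [LinearOrder K] [IsStrictOrderedRing K] {x : K}
    (hx : 0 ≤ x) (k : ℕ) : (2 * x) ^ (k + 1) ≤ (2 * x + 2) ^ k * (2 * x + 1) := by
  rw [pow_succ]
  gcongr <;> linarith

/-- Theorem 4.5: for `q ≥ 2` and `n ≥ δ ≥ 2`, there is a code in `[q]^n` of size at least
`C(n+q-1, n)/((2q+2)^(δ-2)(2q+1))` whose insdel distance between distinct codewords is at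
least `2δ`. -/
theorem exists_good_insdel_code (q n δ : ℕ) (hq : 2 ≤ q) (hδ : 2 ≤ δ) (hn : δ ≤ n) :
    ∃ C : Finset (Fin n → Fin q),
      ((Nat.choose (n + q - 1) n : ℝ))
          / ((2 * (q : ℝ) + 2) ^ (δ - 2) * (2 * (q : ℝ) + 1)) ≤ (C.card : ℝ) ∧
      ∀ u ∈ C, ∀ v ∈ C, u ≠ v → 2 * δ ≤ insdelDist u v := by
  obtain ⟨k, rfl⟩ := Nat.exists_eq_add_of_le' hδ
  have : NeZero q := ⟨by omega⟩
  obtain ⟨C, hcard, hdist⟩ := exists_good_insdel_code_general (Fin q) n (k + 1)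
  rw [Fintype.card_fin] at hcard
  exact ⟨C, (div_le_div_of_nonneg_left (by positivity) (by positivity)
    (two_mul_pow_succ_le q.cast_nonneg k)).trans hcard, hdist⟩
end

section
/- Let q be a prime power, n ≥ 4 an integer with n ≤ q, and α_1,...,α_n pairwise distinct elements of F_q. Then the two-dimensional Reed-Solomon code RS_α(n,2) has insdel distance exactly 2n − 4 if and only if there do NOT exist a ∈ F_q with a ≠ 0, b ∈ F_q, and index triples (i_1,i_2,i_3), (j_1,j_2,j_3) with 1 ≤ i_1 < i_2 < i_3 ≤ n and 1 ≤ j_1 < j_2 < j_3 ≤ n that differ in at least two coordinates, such that α_{i_ℓ} = a·α_{j_ℓ} + b for all ℓ = 1, 2, 3. -/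
/-!
The codewords are the words `t ↦ m * α t + d`, and a common subsequence of length `k` is a pair of
increasing `k`-tuples of positions carrying the same letters.  When two distinct codewords of
slopes `m` and `m'` share a subsequence of length at least two, both slopes are nonzero: a constant
word would agree with the other one at two positions, hence everywhere.  Dividing by `m` turns the
coincidences into an affine map matching the two tuples of evaluation points, and these tuples
agree in at most one coordinate because distinct codewords agree in at most one position.
Conversely, if `x ↦ a * x + b` matches two tuples, its codeword shares a subsequence with the
codeword of `x`.  Interpolation always matches two distinct pairs of positions, so the distance is
at most `2n - 4`; it is smaller exactly when triples can be matched.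
-/

open scoped BigOperators

section CommonSubsequence

variable {β : Type*} {n k : ℕ} {u v : Fin n → β}

lemma ofFn_sublist_ofFn_iff {w : Fin k → β} :
    (List.ofFn w).Sublist (List.ofFn u) ↔
      ∃ i : Fin k → Fin n, StrictMono i ∧ ∀ l, w l = u (i l) := by
  rw [List.sublist_iff_exists_fin_orderEmbedding_get_eq]
  constructor
  · rintro ⟨f, hf⟩
    refine ⟨fun l ↦ (f (l.cast List.length_ofFn.symm)).cast List.length_ofFn,
      fun _ _ hlm ↦ f.strictMono hlm, fun l ↦ ?_⟩
    simpa only [List.get_ofFn, Fin.cast_cast, Fin.cast_eq_self] using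
      hf (l.cast List.length_ofFn.symm)
  · rintro ⟨i, hi, hw⟩
    refine ⟨OrderEmbedding.ofStrictMono
      (fun l ↦ (i (l.cast List.length_ofFn)).cast List.length_ofFn.symm)
      fun _ _ hlm ↦ hi hlm, fun l ↦ ?_⟩
    simpa only [List.get_ofFn] using! hw (l.cast List.length_ofFn)

lemma bddAbove_length_common_sublist (s t : List β) :
    BddAbove {ℓ : ℕ | ∃ w : List β, w.length = ℓ ∧ w.Sublist s ∧ w.Sublist t} :=
  ⟨s.length, by rintro _ ⟨w, rfl, hs, -⟩; exact hs.length_le⟩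

lemma le_lcsLen_iff_exists_sublist :
    k ≤ lcsLen u v ↔
      ∃ w : Fin k → β,
        (List.ofFn w).Sublist (List.ofFn u) ∧ (List.ofFn w).Sublist (List.ofFn v) := by
  have hbdd := bddAbove_length_common_sublist (List.ofFn u) (List.ofFn v)
  constructor
  · intro hk
    obtain ⟨w, hw, hu, hv⟩ : ∃ w : List β, w.length = lcsLen u v ∧ w.Sublist (List.ofFn u) ∧
        w.Sublist (List.ofFn v) :=
      Nat.sSup_mem (by exact ⟨0, [], rfl, List.nil_sublist _, List.nil_sublist _⟩) hbdd
    have hkw : (w.take k).length = k := List.length_take_of_le (hk.trans_eq hw.symm)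
    obtain ⟨w', hw'⟩ : ∃ w' : Fin k → β, List.ofFn w' = w.take k :=
      ⟨_, (List.ofFn_congr hkw _).symm.trans (List.ofFn_get _)⟩
    have hsub : (List.ofFn w').Sublist w := hw' ▸ w.take_sublist k
    exact ⟨w', hsub.trans hu, hsub.trans hv⟩
  · rintro ⟨w, hu, hv⟩
    exact le_csSup hbdd ⟨_, List.length_ofFn, hu, hv⟩

lemma le_lcsLen_iff :
    k ≤ lcsLen u v ↔
      ∃ i j : Fin k → Fin n, StrictMono i ∧ StrictMono j ∧ ∀ l, u (i l) = v (j l) := by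
  simp only [le_lcsLen_iff_exists_sublist, ofFn_sublist_ofFn_iff]
  constructor
  · rintro ⟨w, ⟨i, hi, hu⟩, j, hj, hv⟩
    exact ⟨i, j, hi, hj, fun l ↦ (hu l).symm.trans (hv l)⟩
  · rintro ⟨i, j, hi, hj, h⟩
    exact ⟨fun l ↦ u (i l), ⟨i, hi, fun _ ↦ rfl⟩, j, hj, h⟩

lemma insdelDistSet_eq_iff_not_exists_lt_lcsLen {C : Set (Fin n → β)} (hk : k < n)
    (hC : ∃ u ∈ C, ∃ v ∈ C, u ≠ v ∧ k ≤ lcsLen u v) :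
    insdelDistSet C = 2 * n - 2 * k ↔ ¬∃ u ∈ C, ∃ v ∈ C, u ≠ v ∧ k < lcsLen u v := by
  have insdelDistSet_le {u v : Fin n → β} (hu : u ∈ C) (hv : v ∈ C) (huv : u ≠ v) :
      insdelDistSet C ≤ 2 * n - 2 * lcsLen u v :=
    Nat.sInf_le ⟨u, hu, v, hv, huv, rfl⟩
  obtain ⟨u₀, hu₀, v₀, hv₀, hne₀, hk₀⟩ := hC
  constructor
  · rintro hd ⟨u, hu, v, hv, huv, hlcs⟩
    have hle := insdelDistSet_le hu hv huv
    omega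
  · intro hC'
    refine le_antisymm ((insdelDistSet_le hu₀ hv₀ hne₀).trans (by omega))
      (le_csInf ⟨_, u₀, hu₀, v₀, hv₀, hne₀, rfl⟩ ?_)
    rintro _ ⟨u, hu, v, hv, huv, rfl⟩
    have hlcs : ¬k < lcsLen u v := fun h ↦ hC' ⟨u, hu, v, hv, huv, h⟩
    rw [insdelDist]
    omega

end CommonSubsequence

lemma card_le_hammingDist_add_one {ι : Type*} [Fintype ι] {β : ι → Type*}
    [∀ l, DecidableEq (β l)] {x y : ∀ l, β l} (h : ∀ l m, x l = y l → x m = y m → l = m) :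
    Fintype.card ι ≤ hammingDist x y + 1 := by
  have hagree : (Finset.univ.filter fun l ↦ x l = y l).card ≤ 1 := by
    simpa only [Finset.card_le_one, Finset.mem_filter_univ] using fun l hl m hm ↦ h l m hl hm
  have hsplit : (Finset.univ.filter fun l ↦ x l = y l).card + hammingDist x y =
      Fintype.card ι := Finset.card_filter_add_card_filter_not _
  omega

/-- The word `(m * α t + d)_t`, i.e. the evaluation of the polynomial `m X + d` at the points
`α t`. -/
def affineWord {ι R : Type*} [Semiring R] (α : ι → R) (m d : R) : ι → R :=
  fun t ↦ m * α t + d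

/-- The two-dimensional Reed-Solomon code with evaluation points `α`. -/
def twoDimRSCode {ι R : Type*} [Semiring R] (α : ι → R) : Set (ι → R) :=
  {c | ∃ f : Polynomial R, f.degree < 2 ∧ c = fun t ↦ f.eval (α t)}

lemma mem_twoDimRSCode_iff {ι R : Type*} [Semiring R] {α c : ι → R} :
    c ∈ twoDimRSCode α ↔ ∃ m d, c = affineWord α m d := by
  constructor
  · rintro ⟨f, hf, rfl⟩
    refine ⟨f.coeff 1, f.coeff 0, funext fun t ↦ ?_⟩
    rw [Polynomial.eq_X_add_C_of_degree_le_one (Order.le_of_lt_succ hf)]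
    simp [affineWord]
  · rintro ⟨m, d, rfl⟩
    exact ⟨Polynomial.C m * Polynomial.X + Polynomial.C d, Polynomial.degree_linear_lt,
      by simp [affineWord, funext_iff]⟩

section AffineWord

variable {ι R : Type*} [CommRing R] [NoZeroDivisors R] {α : ι → R} {m d m' d' : R}

lemma affineWord_eq_of_apply_eq {s t : ι} (hst : α s ≠ α t)
    (hs : affineWord α m d s = affineWord α m' d' s)
    (ht : affineWord α m d t = affineWord α m' d' t) :
    affineWord α m d = affineWord α m' d' := by
  simp only [affineWord] at hs ht
  have hslope : m = m' := by
    refine sub_eq_zero.1 ((mul_eq_zero.1 ?_).resolve_right (sub_ne_zero.2 hst))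
    linear_combination hs - ht
  subst hslope
  rw [add_left_cancel hs]

lemma slope_ne_zero_of_apply_eq (hne : affineWord α m d ≠ affineWord α m' d') {s s' t t' : ι}
    (ht : α t ≠ α t') (h : affineWord α m d s = affineWord α m' d' t)
    (h' : affineWord α m d s' = affineWord α m' d' t') : m ≠ 0 := by
  rintro rfl
  have hconst (x y : ι) : affineWord α 0 d x = affineWord α 0 d y := by simp [affineWord]
  exact hne (affineWord_eq_of_apply_eq ht ((hconst t s).trans h) ((hconst t' s').trans h'))

end AffineWord

lemma exists_affine_interpolation {F : Type*} [Field F] {x x' y y' : F} (hx : x ≠ x')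
    (hy : y ≠ y') : ∃ a b : F, a ≠ 0 ∧ y = a * x + b ∧ y' = a * x' + b := by
  have hx' : x - x' ≠ 0 := sub_ne_zero.2 hx
  refine ⟨(y - y') / (x - x'), y - (y - y') / (x - x') * x,
    div_ne_zero (sub_ne_zero.2 hy) hx', by ring, ?_⟩
  field_simp
  ring

/-- Some affine map `x ↦ a * x + b` of nonzero slope carries the points of one increasing
`(k + 1)`-tuple of positions to those of another, where the two tuples differ in at least `k`
coordinates.  The length is `k + 1` so that the Hamming bound needs no subtraction. -/
def HasAffineMatch {R : Type*} [Semiring R] {n : ℕ} (α : Fin n → R) (k : ℕ) : Prop :=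
  ∃ (a b : R) (i j : Fin (k + 1) → Fin n), a ≠ 0 ∧ StrictMono i ∧ StrictMono j ∧
    k ≤ hammingDist i j ∧ ∀ ℓ, α (i ℓ) = a * α (j ℓ) + b

lemma HasAffineMatch.exists_lt_lcsLen {R : Type*} [Semiring R] {n k : ℕ} {α : Fin n → R}
    (hα : Function.Injective α) (hk : 1 ≤ k) (h : HasAffineMatch α k) :
    ∃ u ∈ twoDimRSCode α, ∃ v ∈ twoDimRSCode α, u ≠ v ∧ k < lcsLen u v := by
  obtain ⟨a, b, i, j, -, hi, hj, hij, hmatch⟩ := h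
  have hid (t : Fin n) : affineWord α 1 0 t = α t := by simp [affineWord]
  have hcommon (l : Fin (k + 1)) : affineWord α 1 0 (i l) = affineWord α a b (j l) :=
    (hid _).trans (hmatch l)
  refine ⟨_, mem_twoDimRSCode_iff.2 ⟨1, 0, rfl⟩, _, mem_twoDimRSCode_iff.2 ⟨a, b, rfl⟩,
    fun heq ↦ ?_, le_lcsLen_iff.2 ⟨i, j, hi, hj, hcommon⟩⟩
  have hij' : i = j := funext fun l ↦ hα <| by
    rw [← hid (i l), ← hid (j l), hcommon, heq]
  exact hammingDist_pos.1 (hk.trans hij) hij'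

section AffineMatch

variable {F : Type*} [Field F] {n k : ℕ} {α : Fin n → F}

lemma hasAffineMatch_one (hn : 3 ≤ n) (hα : Function.Injective α) : HasAffineMatch α 1 := by
  have hα' : Function.Injective (α ∘ Fin.castLE hn) := hα.comp (Fin.castLE_injective hn)
  obtain ⟨a, b, ha, h0, h1⟩ := exists_affine_interpolation
    (hα'.ne (show (0 : Fin 3) ≠ 1 by decide)) (hα'.ne (show (0 : Fin 3) ≠ 2 by decide))
  have strictMono_pair {l : Fin 3} (hl : 0 < l) : StrictMono (Fin.castLE hn ∘ ![0, l]) :=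
    (Fin.strictMono_castLE hn).comp (Fin.strictMono_iff_lt_succ.2 (by simpa using hl))
  refine ⟨a, b, Fin.castLE hn ∘ ![0, 2], Fin.castLE hn ∘ ![0, 1], ha,
    strictMono_pair (by decide), strictMono_pair (by decide), hammingDist_pos.2 fun h ↦ ?_,
    Fin.forall_fin_two.2 ⟨h0, h1⟩⟩
  simpa using congrFun h 1

lemma hasAffineMatch_of_common_subsequence (hα : Function.Injective α) (hk : 1 ≤ k)
    {m d m' d' : F} (hne : affineWord α m d ≠ affineWord α m' d') {i j : Fin (k + 1) → Fin n}
    (hi : StrictMono i) (hj : StrictMono j)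
    (h : ∀ l, affineWord α m d (i l) = affineWord α m' d' (j l)) : HasAffineMatch α k := by
  have h0k : (0 : Fin (k + 1)) ≠ Fin.last k := Fin.ne_of_val_ne (show 0 ≠ k by omega)
  have hm : m ≠ 0 :=
    slope_ne_zero_of_apply_eq hne (hα.ne (hj.injective.ne h0k)) (h 0) (h (Fin.last k))
  have hm' : m' ≠ 0 := slope_ne_zero_of_apply_eq hne.symm (hα.ne (hi.injective.ne h0k))
    (h 0).symm (h (Fin.last k)).symm
  have hagree (l l' : Fin (k + 1)) (hl : i l = j l) (hl' : i l' = j l') : l = l' := by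
    by_contra hll'
    exact hne (affineWord_eq_of_apply_eq (hα.ne (hj.injective.ne hll'))
      (hl ▸ h l) (hl' ▸ h l'))
  refine ⟨m' / m, (d' - d) / m, i, j, div_ne_zero hm' hm, hi, hj, ?_, fun l ↦ ?_⟩
  · simpa using card_le_hammingDist_add_one hagree
  · have hl : m * α (i l) + d = m' * α (j l) + d' := h l
    field_simp
    linear_combination hl

lemma exists_lt_lcsLen_iff_hasAffineMatch (hα : Function.Injective α) (hk : 1 ≤ k) :
    (∃ u ∈ twoDimRSCode α, ∃ v ∈ twoDimRSCode α, u ≠ v ∧ k < lcsLen u v) ↔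
      HasAffineMatch α k := by
  refine ⟨?_, HasAffineMatch.exists_lt_lcsLen hα hk⟩
  rintro ⟨u, hu, v, hv, huv, hlcs⟩
  obtain ⟨m, d, rfl⟩ := mem_twoDimRSCode_iff.1 hu
  obtain ⟨m', d', rfl⟩ := mem_twoDimRSCode_iff.1 hv
  obtain ⟨i, j, hi, hj, h⟩ := le_lcsLen_iff.1 hlcs
  exact hasAffineMatch_of_common_subsequence hα hk huv hi hj h

end AffineMatch

theorem rs_two_dim_insdel_iff_general {F : Type*} [Field F] {n : ℕ} (hn : 3 ≤ n) {α : Fin n → F}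
    (hα : Function.Injective α) :
    insdelDistSet {c : Fin n → F |
        ∃ f : Polynomial F, f.degree < 2 ∧ c = fun t => f.eval (α t)} = 2 * n - 4 ↔
      ¬∃ (a b : F) (i j : Fin 3 → Fin n), a ≠ 0 ∧ StrictMono i ∧ StrictMono j ∧
        2 ≤ hammingDist i j ∧ ∀ ℓ : Fin 3, α (i ℓ) = a * α (j ℓ) + b := by
  have hpair : ∃ u ∈ twoDimRSCode α, ∃ v ∈ twoDimRSCode α, u ≠ v ∧ 1 < lcsLen u v :=
    (hasAffineMatch_one hn hα).exists_lt_lcsLen hα le_rfl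
  calc insdelDistSet (twoDimRSCode α) = 2 * n - 4
      ↔ ¬∃ u ∈ twoDimRSCode α, ∃ v ∈ twoDimRSCode α, u ≠ v ∧ 2 < lcsLen u v :=
        insdelDistSet_eq_iff_not_exists_lt_lcsLen hn hpair
    _ ↔ ¬HasAffineMatch α 2 := not_congr (exists_lt_lcsLen_iff_hasAffineMatch hα one_le_two)

/-- Lemma 4.6 (reformulated): a two-dimensional Reed-Solomon code of length `n` has insdel
distance exactly `2n - 4` iff no affine map `x ↦ ax + b` (`a ≠ 0`) matches two increasing
index triples differing in at least two coordinates. -/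
theorem rs_two_dim_insdel_iff (q n : ℕ) (F : Type*) [Field F] [Fintype F]
    (hF : Fintype.card F = q) (hn : 4 ≤ n) (hnq : n ≤ q)
    (α : Fin n → F) (hα : Function.Injective α) :
    insdelDistSet {c : Fin n → F |
        ∃ f : Polynomial F, f.degree < 2 ∧ c = fun t => f.eval (α t)} = 2 * n - 4 ↔
      ¬∃ (a b : F) (i j : Fin 3 → Fin n), a ≠ 0 ∧ StrictMono i ∧ StrictMono j ∧
        2 ≤ hammingDist i j ∧ ∀ ℓ : Fin 3, α (i ℓ) = a * α (j ℓ) + b :=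
  rs_two_dim_insdel_iff_general (by omega) hα
end
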